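/- arXiv:1709.08190 — 4 statements merged into one kernel-verified Lean document; each statement's English description precedes it below -/
import Mathlib

section
/- Let p be a positive integer and q1 > q2 > q3 > q4 ≥ 1 be integers with gcd(p, q_i) = 1 for i = 1,2,3,4. If the four rational Beatty sequences S(p/q_i, β_i), i = 1,2,3,4, form a disjoint covering system of the integers, then p = 15 and (q1, q2, q3, q4) = (8, 4, 2, 1). -/
/-- The Beatty sequence `S(α, β) = {⌊α n + β⌋ : n ∈ ℤ}`. -/
def beattySet (α β : ℝ) : Set ℤ :=
  {m : ℤ | ∃ n : ℤ, m = ⌊α * n + β⌋}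

lemma mem_beatty (p q : ℕ) (hp : 0 < p) (hq : 0 < q) (β : ℝ) (m : ℤ) :
    m ∈ beattySet ((p : ℝ) / (q : ℝ)) β ↔
      ((-((q : ZMod p) * (m : ZMod p) + ((⌈-(q * β)⌉ : ℤ) : ZMod p))) : ZMod p).val < q := by
  have : NeZero p := ⟨hp.ne'⟩
  set C : ℤ := ⌈-(q * β)⌉ with hC
  have hq' : (0 : ℝ) < q := by exact_mod_cast hq
  have hp' : (0 : ℤ) < p := by exact_mod_cast hp
  have h1 : m ∈ beattySet ((p : ℝ) / (q : ℝ)) β ↔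
      ∃ n : ℤ, q * m + C ≤ p * n ∧ p * n < q * m + C + q := by
    unfold beattySet
    simp only [Set.mem_ofPred_eq]
    refine exists_congr fun n => ?_
    rw [eq_comm, Int.floor_eq_iff]
    have e : (p : ℝ) / q * n + β = (p * n + q * β) / q := by field_simp
    rw [e, le_div_iff₀ hq', div_lt_iff₀ hq']
    have a1 : (m : ℝ) * q ≤ p * n + q * β ↔ q * m + C ≤ p * n := by
      have : C ≤ p * n - q * m ↔ -(q * β) ≤ ((p * n - q * m : ℤ) : ℝ) := Int.ceil_le
      push_cast at this
      constructor
      · intro h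
        have := this.2 (by linarith)
        linarith
      · intro h
        have := this.1 (by linarith)
        linarith
    have a2 : (p * n + q * β : ℝ) < (m + 1) * q ↔ p * n < q * m + C + q := by
      have : (p * n - q * m - q : ℤ) < C ↔ ((p * n - q * m - q : ℤ) : ℝ) < -(q * β) := Int.lt_ceil
      push_cast at this
      constructor
      · intro h
        have := this.2 (by linarith)
        linarith
      · intro h
        have := this.1 (by linarith)
        linarith
    rw [a1, a2]
  rw [h1]
  have h2 : (((-((q : ZMod p) * (m : ZMod p) + (C : ZMod p))) : ZMod p).val : ℤ)
      = (-(q * m + C)) % p := by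
    rw [← ZMod.val_intCast]
    push_cast
    rfl
  rw [← Int.ofNat_lt (n := ZMod.val _), h2]
  have h3 := Int.mul_ediv_add_emod (-(q * m + C)) p
  have h4 := Int.emod_nonneg (-(q * m + C)) hp'.ne'
  have h5 := Int.emod_lt_of_pos (-(q * m + C)) hp'
  set t := (-(q * m + C)) % p
  set d := (-(q * m + C)) / p
  constructor
  · rintro ⟨n, h6, h7⟩
    have : 0 ≤ n + d := by
      by_contra hneg
      have : n + d ≤ -1 := by omega
      nlinarith
    nlinarith
  · intro h
    exact ⟨-d, by nlinarith, by nlinarith⟩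

lemma norm_char (p : ℕ) [NeZero p] (r : ZMod p) :
    ‖ZMod.stdAddChar r - 1‖ = 2 * Real.sin (Real.pi / p * r.valMinAbs.natAbs) := by
  have hp : (0 : ℝ) < p := by exact_mod_cast NeZero.pos p
  have h1 : ZMod.stdAddChar r = Complex.exp (Complex.I * ((2 * (Real.pi / p * r.valMinAbs) : ℝ) : ℂ)) := by
    conv_lhs => rw [← ZMod.coe_valMinAbs r]
    rw [ZMod.stdAddChar_coe]
    congr 1
    push_cast
    ring
  rw [h1, Complex.norm_exp_I_mul_ofReal_sub_one]
  have h2 : (2 * (Real.pi / p * r.valMinAbs) : ℝ) / 2 = Real.pi / p * r.valMinAbs := by ring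
  rw [h2, norm_mul, Real.norm_ofNat]
  congr 1
  have h3 : r.valMinAbs.natAbs ≤ p / 2 := ZMod.natAbs_valMinAbs_le r
  have h4 : ((r.valMinAbs.natAbs : ℕ) : ℝ) ≤ p := by
    have : r.valMinAbs.natAbs ≤ p := by omega
    exact_mod_cast this
  have h5 : 0 ≤ Real.sin (Real.pi / p * r.valMinAbs.natAbs) := by
    apply Real.sin_nonneg_of_nonneg_of_le_pi
    · have := Real.pi_pos; positivity
    · rw [div_mul_eq_mul_div, div_le_iff₀ hp]
      exact mul_le_mul_of_nonneg_left h4 Real.pi_pos.le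
  rw [← abs_of_nonneg h5, Real.norm_eq_abs]
  rcases Int.natAbs_eq r.valMinAbs with h | h
  · have : (r.valMinAbs : ℝ) = (r.valMinAbs.natAbs : ℝ) :=
      (congrArg (Int.cast (R := ℝ)) h).trans (Int.cast_natCast _)
    rw [this]
  · have : (r.valMinAbs : ℝ) = -(r.valMinAbs.natAbs : ℝ) := by exact_mod_cast congrArg (Int.cast (R := ℝ)) h
    rw [this, mul_neg, Real.sin_neg, abs_neg]

lemma trig_aux (x : ℝ) (hx0 : 0 < x) (hx : x ≤ 0.2857) :
    0 < Real.sin (3 * x) ∧ 0 < Real.sin (4 * x) ∧ 0 < Real.sin (5 * x) ∧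
    1 / Real.sin (3 * x) + 1 / Real.sin (4 * x) + 1 / Real.sin (5 * x) < 1 / Real.sin x := by
  have hpi := Real.pi_gt_three
  have hs : 0 < Real.sin x := Real.sin_pos_of_pos_of_lt_pi hx0 (by linarith)
  have hc : 0.959 ≤ Real.cos x := by
    have := Real.one_sub_sq_div_two_le_cos (x := x)
    nlinarith
  have hsc := Real.sin_sq_add_cos_sq x
  set s := Real.sin x
  set c := Real.cos x
  have hc1 : c ≤ 1 := Real.cos_le_one x
  have e2 : Real.sin (2 * x) = 2 * s * c := Real.sin_two_mul x
  have c2 : Real.cos (2 * x) = 2 * c ^ 2 - 1 := Real.cos_two_mul x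
  have e3 : Real.sin (3 * x) = s * (4 * c ^ 2 - 1) := by
    rw [show 3 * x = 2 * x + x by ring, Real.sin_add, e2, c2]; ring
  have e4 : Real.sin (4 * x) = s * (4 * c * (2 * c ^ 2 - 1)) := by
    rw [show 4 * x = 2 * (2 * x) by ring, Real.sin_two_mul, e2, c2]; ring
  have c4 : Real.cos (4 * x) = 2 * (2 * c ^ 2 - 1) ^ 2 - 1 := by
    rw [show 4 * x = 2 * (2 * x) by ring, Real.cos_two_mul, c2]
  have e5 : Real.sin (5 * x) = s * (16 * c ^ 4 - 12 * c ^ 2 + 1) := by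
    rw [show 5 * x = 4 * x + x by ring, Real.sin_add, e4, c4]; ring
  have hcc : 0.9196 ≤ c ^ 2 := by nlinarith
  have b3 : 2.67 ≤ 4 * c ^ 2 - 1 := by linarith
  have b4 : 3.21 ≤ 4 * c * (2 * c ^ 2 - 1) := by nlinarith
  have b5 : 3.49 ≤ 16 * c ^ 4 - 12 * c ^ 2 + 1 := by nlinarith
  rw [e3, e4, e5]
  refine ⟨by positivity, mul_pos hs (by linarith), mul_pos hs (by linarith), ?_⟩
  have k : ∀ d D : ℝ, 0 < d → d ≤ D → 1 / (s * D) ≤ (1 / s) * (1 / d) := by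
    intro d D hd hD
    rw [← one_div_mul_one_div]
    exact mul_le_mul_of_nonneg_left (one_div_le_one_div_of_le hd hD) (by positivity)
  have k3 := k 2.67 _ (by norm_num) b3
  have k4 := k 3.21 _ (by norm_num) b4
  have k5 := k 3.49 _ (by norm_num) b5
  have hs' : 0 < 1 / s := by positivity
  have : (1 / s) * (1 / 2.67) + (1 / s) * (1 / 3.21) + (1 / s) * (1 / 3.49) < 1 / s := by
    rw [← mul_add, ← mul_add]
    have : (1 / 2.67 + 1 / 3.21 + 1 / 3.49 : ℝ) < 1 := by norm_num
    nlinarith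
  linarith

lemma sin_mono_aux (p : ℕ) (hp : 11 ≤ p) (a b : ℕ) (hab : a ≤ b) (hb : b ≤ p / 2) :
    Real.sin (Real.pi / p * a) ≤ Real.sin (Real.pi / p * b) := by
  have hpi := Real.pi_pos
  have hp' : (0 : ℝ) < p := by
    have : 0 < p := by omega
    exact_mod_cast this
  have hb' : (2 * b : ℝ) ≤ p := by
    have : 2 * b ≤ p := by omega
    exact_mod_cast this
  have hab' : (a : ℝ) ≤ b := by exact_mod_cast hab
  apply Real.sin_le_sin_of_le_of_le_pi_div_two
  · have : 0 ≤ Real.pi / p * a := by positivity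
    linarith
  · rw [div_mul_eq_mul_div, div_le_iff₀ hp']
    nlinarith
  · exact mul_le_mul_of_nonneg_left hab' (by positivity)

lemma trig_sorted (p : ℕ) (hp : 11 ≤ p) (a b c : ℕ) (h3 : 3 ≤ a) (hab : a < b) (hbc : b < c)
    (hc : c ≤ p / 2) :
    1 / Real.sin (Real.pi / p * a) + 1 / Real.sin (Real.pi / p * b)
      + 1 / Real.sin (Real.pi / p * c) < 1 / Real.sin (Real.pi / p) := by
  have hpi := Real.pi_pos
  have hp' : (11 : ℝ) ≤ p := by exact_mod_cast hp
  obtain ⟨t3, t4, t5, t⟩ := trig_aux (Real.pi / p) (by positivity) (by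
    rw [div_le_iff₀ (by linarith)]
    have := Real.pi_lt_d4
    nlinarith)
  have m3 := sin_mono_aux p hp 3 a h3 (by omega)
  have m4 := sin_mono_aux p hp 4 b (by omega) (by omega)
  have m5 := sin_mono_aux p hp 5 c (by omega) (by omega)
  push_cast at m3 m4 m5
  rw [mul_comm _ (3 : ℝ)] at m3
  rw [mul_comm _ (4 : ℝ)] at m4
  rw [mul_comm _ (5 : ℝ)] at m5
  have := one_div_le_one_div_of_le t3 m3
  have := one_div_le_one_div_of_le t4 m4
  have := one_div_le_one_div_of_le t5 m5
  linarith

lemma trig_main (p : ℕ) (hp : 11 ≤ p) (a b c : ℕ) (ha3 : 3 ≤ a) (hb3 : 3 ≤ b) (hc3 : 3 ≤ c)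
    (hab : a ≠ b) (hbc : b ≠ c) (hac : a ≠ c)
    (ha : a ≤ p / 2) (hb : b ≤ p / 2) (hc : c ≤ p / 2) :
    1 / Real.sin (Real.pi / p * a) + 1 / Real.sin (Real.pi / p * b)
      + 1 / Real.sin (Real.pi / p * c) < 1 / Real.sin (Real.pi / p) := by
  rcases lt_or_gt_of_ne hab with h1 | h1 <;> rcases lt_or_gt_of_ne hbc with h2 | h2 <;>
    rcases lt_or_gt_of_ne hac with h3 | h3
  · exact trig_sorted p hp a b c ha3 h1 h2 hc
  · omega
  · have := trig_sorted p hp a c b ha3 h3 h2 hb; linarith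
  · have := trig_sorted p hp c a b hc3 h3 h1 hb; linarith
  · have := trig_sorted p hp b a c hb3 h1 h3 hc; linarith
  · have := trig_sorted p hp b c a hb3 h2 h3 ha; linarith
  · omega
  · have := trig_sorted p hp c b a hc3 h2 h1 ha; linarith

noncomputable def fsum (p q : ℕ) [NeZero p] (C k : ZMod p) : ℂ :=
  ∑ m : ZMod p, if (-((q : ZMod p) * m + C)).val < q then ZMod.stdAddChar (m * k) else 0

lemma fsum_eq (p q : ℕ) [NeZero p] (hq : q ≤ p) (C k u : ZMod p) (hu : (q : ZMod p) * u = 1) :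
    fsum p q C k = ZMod.stdAddChar (-(k * u * C)) *
      ∑ j ∈ Finset.range q, (ZMod.stdAddChar (-(k * u))) ^ j := by
  have key : ∀ m : ZMod p, -(u * (-((q : ZMod p) * m + C) + C)) = m := by
    intro m
    linear_combination m * hu
  have key2 : ∀ m : ZMod p, -((q : ZMod p) * -(u * (m + C)) + C) = m := by
    intro m
    linear_combination (m + C) * hu
  unfold fsum
  rw [← Finset.sum_filter, Finset.mul_sum]
  refine Finset.sum_nbij' (fun m => (-((q : ZMod p) * m + C)).val)
    (fun j => -(u * ((j : ZMod p) + C))) ?_ ?_ ?_ ?_ ?_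
  · intro m hm
    simpa using hm
  · intro j hj
    simp only [Finset.mem_filter, Finset.mem_univ, true_and, key2]
    rw [ZMod.val_natCast, Nat.mod_eq_of_lt]
    · simpa using hj
    · have := Finset.mem_range.1 hj; omega
  · intro m hm
    simp only [ZMod.natCast_val, ZMod.cast_id', id_eq]
    exact key m
  · intro j hj
    simp only [key2]
    rw [ZMod.val_natCast, Nat.mod_eq_of_lt]
    have := Finset.mem_range.1 hj; omega
  · intro m hm
    rw [← AddChar.map_nsmul_eq_pow, ← AddChar.map_add_eq_mul]
    congr 1
    simp only [nsmul_eq_mul, ZMod.natCast_val, ZMod.cast_id', id_eq]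
    linear_combination (-k * m) * hu

lemma fsum_zero (p q : ℕ) [NeZero p] (hq : q ≤ p) (C u : ZMod p) (hu : (q : ZMod p) * u = 1) :
    fsum p q C 0 = q := by
  rw [fsum_eq p q hq C 0 u hu]; simp

lemma fsum_norm (p q : ℕ) [NeZero p] (hq : q ≤ p) (C k u : ZMod p) (hu : (q : ZMod p) * u = 1) :
    ‖fsum p q C k‖ * ‖ZMod.stdAddChar (-(k * u)) - 1‖ = ‖ZMod.stdAddChar (-k) - 1‖ := by
  rw [fsum_eq p q hq C k u hu, norm_mul, AddChar.norm_apply, one_mul, ← norm_mul, geom_sum_mul,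
    ← AddChar.map_nsmul_eq_pow]
  congr 4
  rw [nsmul_eq_mul]
  linear_combination (-k) * hu

lemma fsum_total (p : ℕ) [NeZero p] (q : Fin 4 → ℕ) (C : Fin 4 → ZMod p) (k : ZMod p)
    (hcov : ∀ m : ZMod p, ∃! i, (-((q i : ZMod p) * m + C i)).val < q i) :
    ∑ i, fsum p (q i) (C i) k = if k = 0 then (p : ℂ) else 0 := by
  unfold fsum
  rw [Finset.sum_comm]
  have : ∀ m : ZMod p, (∑ i, if (-((q i : ZMod p) * m + C i)).val < q i
      then (ZMod.stdAddChar (m * k) : ℂ) else 0) = ZMod.stdAddChar (m * k) := by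
    intro m
    obtain ⟨i, hi, hu⟩ := hcov m
    rw [Finset.sum_eq_single i]
    · rw [if_pos hi]
    · intro j _ hj
      rw [if_neg]
      intro h
      exact hj (hu j h)
    · simp
  rw [Finset.sum_congr rfl (fun m _ => this m)]
  rw [AddChar.sum_mulShift k (ZMod.isPrimitive_stdAddChar p)]
  split_ifs <;> simp [ZMod.card]

lemma natAbs_eq_cases (p : ℕ) [NeZero p] (r : ZMod p) (n : ℕ) (h : r.valMinAbs.natAbs = n) :
    r = n ∨ r = -n := by
  have e := ZMod.coe_valMinAbs r
  rcases Int.natAbs_eq r.valMinAbs with h' | h' <;> rw [h] at h' <;> rw [h'] at e <;>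
    push_cast at e
  · left; exact e.symm
  · right; exact e.symm

lemma natAbs_eq_iff (p : ℕ) [NeZero p] (r s : ZMod p)
    (h : r.valMinAbs.natAbs = s.valMinAbs.natAbs) : r = s ∨ r = -s := by
  rcases natAbs_eq_cases p r _ rfl with h1 | h1 <;> rcases natAbs_eq_cases p s _ h.symm with h2 | h2
  · left; rw [h1, h2]
  · right; rw [h1, h2, h]; simp
  · right; rw [h1, h2]
  · left; rw [h1, h2]

lemma fin4_split (i : Fin 4) : ∃ a b c : Fin 4, a ≠ i ∧ b ≠ i ∧ c ≠ i ∧ a ≠ b ∧ b ≠ c ∧ a ≠ c ∧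
    ∀ F : Fin 4 → ℂ, ∑ j, F j = F i + (F a + F b + F c) := by
  fin_cases i
  · exact ⟨1, 2, 3, by decide, by decide, by decide, by decide, by decide, by decide,
      fun F => by rw [Fin.sum_univ_four]; simp; ring⟩
  · exact ⟨0, 2, 3, by decide, by decide, by decide, by decide, by decide, by decide,
      fun F => by rw [Fin.sum_univ_four]; simp; ring⟩
  · exact ⟨0, 1, 3, by decide, by decide, by decide, by decide, by decide, by decide,
      fun F => by rw [Fin.sum_univ_four]; simp; ring⟩
  · exact ⟨0, 1, 2, by decide, by decide, by decide, by decide, by decide, by decide,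
      fun F => by rw [Fin.sum_univ_four]; simp; ring⟩

lemma exists_two (p : ℕ) [NeZero p] (hp : 11 ≤ p) (q : Fin 4 → ℕ) (C u : Fin 4 → ZMod p)
    (hq : ∀ i, q i ≤ p) (hu : ∀ i, (q i : ZMod p) * u i = 1)
    (hne : ∀ i j, i ≠ j → (q i : ZMod p) ≠ q j ∧ (q i : ZMod p) ≠ -q j)
    (hcov : ∀ m : ZMod p, ∃! i, (-((q i : ZMod p) * m + C i)).val < q i) (i : Fin 4) :
    ∃ j, (q i : ZMod p) = 2 * q j ∨ (q i : ZMod p) = -(2 * q j) := by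
  by_contra hcon
  push Not at hcon
  have : Fact (1 < p) := ⟨by omega⟩
  set k : ZMod p := ((q i : ℕ) : ZMod p) with hk
  have hk0 : k ≠ 0 := by
    intro h0
    have := hu i
    rw [← hk, h0, zero_mul] at this
    exact zero_ne_one this
  have hpos : ∀ r : ZMod p, r ≠ 0 → 0 < ‖ZMod.stdAddChar r - 1‖ := by
    intro r hr
    rw [norm_pos_iff, sub_ne_zero]
    intro h
    apply hr
    apply ZMod.injective_stdAddChar
    simpa using h
  have hr0 : ∀ j, -(k * u j) ≠ 0 := by
    intro j h
    apply hk0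
    linear_combination (-(q j : ZMod p)) * h - k * hu j
  have hsin : ∀ j, ‖fsum p (q j) (C j) k‖ = ‖ZMod.stdAddChar (-k) - 1‖ / 2 *
      (1 / Real.sin (Real.pi / p * (-(k * u j)).valMinAbs.natAbs)) := by
    intro j
    have h1 := fsum_norm p (q j) (hq j) (C j) k (u j) (hu j)
    have h2 := hpos _ (hr0 j)
    rw [norm_char p (-(k * u j))] at h1 h2
    have h3 : 0 < Real.sin (Real.pi / p * (-(k * u j)).valMinAbs.natAbs) := by linarith
    rw [← h1]
    generalize Real.sin (Real.pi / p * (-(k * u j)).valMinAbs.natAbs) = S at h3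
    field_simp
  have hi1 : (-(k * u i)).valMinAbs.natAbs = 1 := by
    rw [hk, hu i, ZMod.natAbs_valMinAbs_neg]
    have := ZMod.valMinAbs_natCast_of_le_half (n := p) (a := 1) (by omega)
    simp only [Nat.cast_one] at this
    rw [this]; rfl
  have h3 : ∀ j, j ≠ i → 3 ≤ (-(k * u j)).valMinAbs.natAbs := by
    intro j hj
    by_contra hlt
    have hcases : (-(k * u j)).valMinAbs.natAbs = 0 ∨ (-(k * u j)).valMinAbs.natAbs = 1 ∨
      (-(k * u j)).valMinAbs.natAbs = 2 := by omega
    have hh := hne i j (Ne.symm hj)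
    rw [← hk] at hh
    rcases hcases with h | h | h
    · rcases natAbs_eq_cases p _ _ h with h | h <;> apply hr0 j <;> simpa using h
    · rcases natAbs_eq_cases p _ _ h with h | h
      · apply hh.2; push_cast at h; linear_combination (-(q j : ZMod p)) * h - k * hu j
      · apply hh.1; push_cast at h; linear_combination (-(q j : ZMod p)) * h - k * hu j
    · rcases natAbs_eq_cases p _ _ h with h | h
      · apply (hcon j).2; push_cast at h; linear_combination (-(q j : ZMod p)) * h - k * hu j
      · apply (hcon j).1; push_cast at h; linear_combination (-(q j : ZMod p)) * h - k * hu j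
  have hd : ∀ j l, j ≠ l → (-(k * u j)).valMinAbs.natAbs ≠ (-(k * u l)).valMinAbs.natAbs := by
    intro j l hjl h
    have hh := hne l j (Ne.symm hjl)
    have hui := hu i
    rw [← hk] at hui
    rcases natAbs_eq_iff p _ _ h with h | h
    · apply hh.1
      linear_combination (-(q j : ZMod p) * q l * u i) * h - (q l - q j : ZMod p) * hui
        - (q l * k * u i) * hu j + (q j * k * u i) * hu l
    · apply hh.2
      linear_combination (-(q j : ZMod p) * q l * u i) * h - (q l + q j : ZMod p) * hui
        - (q l * k * u i) * hu j - (q j * k * u i) * hu l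
  obtain ⟨a, b, c, hai, hbi, hci, hab, hbc, hac, hF⟩ := fin4_split i
  have htot := fsum_total p q C k hcov
  rw [if_neg hk0, hF] at htot
  have hle : ‖fsum p (q i) (C i) k‖ ≤ ‖fsum p (q a) (C a) k‖ + ‖fsum p (q b) (C b) k‖
      + ‖fsum p (q c) (C c) k‖ := by
    rw [eq_neg_of_add_eq_zero_left htot, norm_neg]
    exact norm_add₃_le
  rw [hsin, hsin, hsin, hsin, hi1, ← mul_add, ← mul_add] at hle
  have hN := hpos (-k) (neg_ne_zero.2 hk0)
  have hle' := le_of_mul_le_mul_left hle (by linarith)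
  have := trig_main p hp _ _ _ (h3 a hai) (h3 b hbi) (h3 c hci) (hd a b hab) (hd b c hbc)
    (hd a c hac) (ZMod.natAbs_valMinAbs_le _) (ZMod.natAbs_valMinAbs_le _)
    (ZMod.natAbs_valMinAbs_le _)
  rw [Nat.cast_one, mul_one] at hle'
  linarith

lemma p_cases (p : ℕ) [NeZero p] (q : Fin 4 → ℕ) (u : Fin 4 → ZMod p)
    (hu : ∀ i, (q i : ZMod p) * u i = 1)
    (hne : ∀ i j, i ≠ j → (q i : ZMod p) ≠ q j ∧ (q i : ZMod p) ≠ -q j)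
    (h2 : ∀ i, ∃ j, (q i : ZMod p) = 2 * q j ∨ (q i : ZMod p) = -(2 * q j)) :
    p ∣ 15 ∨ p ∣ 17 := by
  choose σ hσ using h2
  have hinj : Function.Injective σ := by
    intro a b hab
    by_contra hn
    have := hne a b hn
    have ha := hσ a
    have hb := hσ b
    rw [hab] at ha
    rcases ha with ha | ha <;> rcases hb with hb | hb
    · exact this.1 (ha.trans hb.symm)
    · exact this.2 (by rw [ha, hb]; ring)
    · exact this.2 (by rw [ha, hb])
    · exact this.1 (ha.trans hb.symm)
  have hbij := Finite.injective_iff_bijective.1 hinj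
  have hprod : ∏ i, (q (σ i) : ZMod p) = ∏ i, (q i : ZMod p) :=
    hbij.prod_comp (fun i => (q i : ZMod p))
  have hU : (∏ i, (q i : ZMod p)) * ∏ i, u i = 1 := by
    rw [← Finset.prod_mul_distrib]
    exact Finset.prod_eq_one fun i _ => hu i
  have hε : ∀ i, ∃ e : ZMod p, e ^ 2 = 1 ∧ (e = 1 ∨ e = -1) ∧ (q i : ZMod p) = e * (2 * q (σ i)) := by
    intro i
    rcases hσ i with h | h
    · exact ⟨1, by ring, Or.inl rfl, by rw [one_mul]; exact h⟩
    · exact ⟨-1, by ring, Or.inr rfl, by rw [neg_one_mul]; exact h⟩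
  choose e _ he2 he using hε
  have hE : (∏ i, e i) = 1 ∨ (∏ i, e i) = -1 := by
    rw [Fin.prod_univ_four]
    rcases he2 0 with h0 | h0 <;> rcases he2 1 with h1 | h1 <;> rcases he2 2 with h2 | h2 <;>
      rcases he2 3 with h3 | h3 <;> rw [h0, h1, h2, h3] <;> simp
  have hP : ∏ i, (q i : ZMod p) = (∏ i, e i) * (16 * ∏ i, (q i : ZMod p)) := by
    conv_lhs => rw [Finset.prod_congr rfl (fun i _ => he i)]
    rw [Finset.prod_mul_distrib, Finset.prod_mul_distrib, hprod]
    simp only [Finset.prod_const, Finset.card_univ, Fintype.card_fin]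
    norm_num
  rcases hE with h | h <;> rw [h] at hP
  · left
    rw [← ZMod.natCast_eq_zero_iff]
    push_cast
    linear_combination (-(∏ i, u i)) * hP - 15 * hU
  · right
    rw [← ZMod.natCast_eq_zero_iff]
    push_cast
    linear_combination ((∏ i, u i)) * hP - 17 * hU

set_option synthInstance.maxSize 5000 in
set_option synthInstance.maxHeartbeats 400000 in
lemma fin_seventeen : ∀ a < 17, ∀ b < a, ∀ c < b, ∀ d < c, 1 ≤ d → a + b + c + d = 17 →
    (∀ x ∈ [a, b, c, d], ∃ y ∈ [a, b, c, d], (x + 15 * y) % 17 = 0 ∨ (x + 2 * y) % 17 = 0) →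
    False := by
  decide +kernel

set_option synthInstance.maxSize 5000 in
set_option synthInstance.maxHeartbeats 400000 in
lemma fin_fifteen : ∀ a < 15, ∀ b < a, ∀ c < b, ∀ d < c, 1 ≤ d → a + b + c + d = 15 →
    (∀ x ∈ [a, b, c, d], Nat.gcd 15 x = 1) →
    a = 8 ∧ b = 4 ∧ c = 2 ∧ d = 1 := by
  decide +kernel

/-- Fraenkel's conjecture for `n = 4` with equal numerators (Theorem A):
if the four rational Beatty sequences `S(p/qᵢ, βᵢ)` form a disjoint covering
system of the integers (every integer lies in exactly one of them), with
`q₁ > q₂ > q₃ > q₄ ≥ 1` and `gcd(p, qᵢ) = 1`, then `p = 15` and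
`(q₁, q₂, q₃, q₄) = (8, 4, 2, 1)`. -/
theorem fraenkel_four (p q1 q2 q3 q4 : ℕ) (hp : 0 < p)
    (h12 : q2 < q1) (h23 : q3 < q2) (h34 : q4 < q3) (h4 : 1 ≤ q4)
    (hg1 : Nat.gcd p q1 = 1) (hg2 : Nat.gcd p q2 = 1)
    (hg3 : Nat.gcd p q3 = 1) (hg4 : Nat.gcd p q4 = 1)
    (β : Fin 4 → ℝ)
    (hcov : ∀ m : ℤ, ∃! i : Fin 4,
      m ∈ beattySet ((p : ℝ) / ((![q1, q2, q3, q4] i : ℕ) : ℝ)) (β i)) :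
    p = 15 ∧ q1 = 8 ∧ q2 = 4 ∧ q3 = 2 ∧ q4 = 1 := by
  have : NeZero p := ⟨hp.ne'⟩
  set q : Fin 4 → ℕ := ![q1, q2, q3, q4] with hqdef
  have hq0 : ∀ i, 0 < q i := by
    intro i; fin_cases i <;> simp [hqdef] <;> omega
  have hg : ∀ i, Nat.gcd p (q i) = 1 := by
    intro i; fin_cases i <;> simpa [hqdef]
  have hqinj : ∀ i j, i ≠ j → q i ≠ q j := by
    intro i j h
    fin_cases i <;> fin_cases j <;> simp [hqdef] at h ⊢ <;> omega
  set C : Fin 4 → ZMod p := fun i => ((⌈-(q i * β i)⌉ : ℤ) : ZMod p) with hC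
  have hcov' : ∀ m : ZMod p, ∃! i, (-((q i : ZMod p) * m + C i)).val < q i := by
    intro m
    obtain ⟨n, rfl⟩ := ZMod.intCast_surjective m
    have h := hcov n
    simp only [fun i => mem_beatty p (q i) hp (hq0 i) (β i) n] at h
    exact h
  have hlt : ∀ i, q i < p := by
    intro i
    by_contra hge
    have hge : p ≤ q i := by omega
    obtain ⟨j, hj⟩ : ∃ j, j ≠ i := exists_ne i
    obtain ⟨l, -, hl⟩ := hcov ⌊β j⌋
    have e1 := hl j ⟨0, by simp⟩
    have e2 := hl i ((mem_beatty p (q i) hp (hq0 i) (β i) _).2 (lt_of_lt_of_le (ZMod.val_lt _) hge))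
    exact hj (e1.trans e2.symm)
  have hu : ∀ i, (q i : ZMod p) * (q i : ZMod p)⁻¹ = 1 := by
    intro i
    exact ZMod.coe_mul_inv_eq_one _ (Nat.Coprime.symm (hg i))
  have hsum : q1 + q2 + q3 + q4 = p := by
    have h := fsum_total p q C 0 hcov'
    rw [if_pos rfl, Finset.sum_congr rfl
      (fun i _ => fsum_zero p (q i) (hlt i).le (C i) _ (hu i)), Fin.sum_univ_four] at h
    have h' : q 0 + q 1 + q 2 + q 3 = p := by exact_mod_cast h
    exact h'
  have hsumlt : ∀ i j, i ≠ j → q i + q j < p := by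
    intro i j h
    fin_cases i <;> fin_cases j <;> simp [hqdef] at h ⊢ <;> omega
  have hne : ∀ i j, i ≠ j → (q i : ZMod p) ≠ q j ∧ (q i : ZMod p) ≠ -q j := by
    intro i j h
    constructor
    · intro he
      rw [ZMod.natCast_eq_natCast_iff'] at he
      rw [Nat.mod_eq_of_lt (hlt i), Nat.mod_eq_of_lt (hlt j)] at he
      exact hqinj i j h he
    · intro he
      have : ((q i + q j : ℕ) : ZMod p) = 0 := by
        push_cast; rw [he]; ring
      rw [ZMod.natCast_eq_zero_iff] at this
      have h1 := Nat.le_of_dvd (by have := hq0 i; omega) this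
      have h2 := hsumlt i j h
      omega
  by_cases hp11 : 11 ≤ p
  · have h2 := exists_two p hp11 q C _ (fun i => (hlt i).le) hu hne hcov'
    have l1 : q1 < p := hlt 0
    rcases p_cases p q _ hu hne h2 with hd | hd
    · have hp15 : p = 15 := by
        have := Nat.le_of_dvd (by norm_num) hd
        interval_cases p <;> omega
      clear hcov' h2 hne hu C hC
      subst hp15
      exact ⟨rfl, fin_fifteen q1 l1 q2 h12 q3 h23 q4 h34 h4 hsum (by simp [hg1, hg2, hg3, hg4])⟩
    · exfalso
      have hp17 : p = 17 := by
        have := Nat.le_of_dvd (by norm_num) hd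
        interval_cases p <;> omega
      have h2' : ∀ i, ∃ j, (q i + 15 * q j) % 17 = 0 ∨ (q i + 2 * q j) % 17 = 0 := by
        intro i
        obtain ⟨j, hj⟩ := h2 i
        refine ⟨j, hj.imp (fun h => ?_) (fun h => ?_)⟩
        · apply Nat.mod_eq_zero_of_dvd
          rw [← hp17, ← ZMod.natCast_eq_zero_iff]
          have h17 : ((17 : ℕ) : ZMod p) = 0 := by rw [← hp17]; simp
          push_cast at h17 ⊢
          linear_combination h + (q j : ZMod p) * h17
        · apply Nat.mod_eq_zero_of_dvd
          rw [← hp17, ← ZMod.natCast_eq_zero_iff]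
          push_cast
          linear_combination h
      refine fin_seventeen q1 (by omega) q2 h12 q3 h23 q4 h34 h4 (by omega) ?_
      have hmem : ∀ j, q j ∈ [q1, q2, q3, q4] := by
        intro j; fin_cases j <;> simp [hqdef]
      intro x hx
      have : ∃ i, x = q i := by
        simp only [List.mem_cons, List.not_mem_nil, or_false] at hx
        rcases hx with h | h | h | h
        · exact ⟨0, h⟩
        · exact ⟨1, h⟩
        · exact ⟨2, h⟩
        · exact ⟨3, h⟩
      obtain ⟨i, rfl⟩ := this
      obtain ⟨j, hj⟩ := h2' i
      exact ⟨q j, hmem j, hj⟩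
  · exfalso
    have e : p = 10 ∧ q3 = 2 := by omega
    rw [e.1, e.2] at hg3
    norm_num at hg3
end

section
/- Let p be a positive integer and q1 > q2 > q3 ≥ 1 be integers with gcd(p, q_i) = 1 for i = 1,2,3. If the three rational Beatty sequences S(p/q_i, β_i), i = 1,2,3, form a disjoint covering system of the integers, then p = 7 and (q1, q2, q3) = (4, 2, 1). -/
theorem pc_gen {R : Type*} {a b : R} {l s t : List R} (h : List.Perm (a :: l) (s ++ b :: t))
    (hab : a = b) : List.Perm l (s ++ t) := by
  subst hab
  exact List.Perm.cons_inv (h.trans List.perm_middle)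

theorem pc6 {R : Type*} {a n1 n2 n3 n4 n5 n6 : R} {l : List R}
    (h : List.Perm (a :: l) [n1, n2, n3, n4, n5, n6]) :
    (a = n1 ∧ List.Perm l [n2, n3, n4, n5, n6]) ∨ (a = n2 ∧ List.Perm l [n1, n3, n4, n5, n6]) ∨
    (a = n3 ∧ List.Perm l [n1, n2, n4, n5, n6]) ∨ (a = n4 ∧ List.Perm l [n1, n2, n3, n5, n6]) ∨
    (a = n5 ∧ List.Perm l [n1, n2, n3, n4, n6]) ∨ (a = n6 ∧ List.Perm l [n1, n2, n3, n4, n5]) := by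
  have hm : a ∈ [n1, n2, n3, n4, n5, n6] := h.subset (by simp)
  simp only [List.mem_cons, List.not_mem_nil, or_false] at hm
  rcases hm with e | e | e | e | e | e
  · exact Or.inl ⟨e, pc_gen (s := []) h e⟩
  · exact Or.inr (Or.inl ⟨e, pc_gen (s := [n1]) h e⟩)
  · exact Or.inr (Or.inr (Or.inl ⟨e, pc_gen (s := [n1, n2]) h e⟩))
  · exact Or.inr (Or.inr (Or.inr (Or.inl ⟨e, pc_gen (s := [n1, n2, n3]) h e⟩)))
  · exact Or.inr (Or.inr (Or.inr (Or.inr (Or.inl ⟨e, pc_gen (s := [n1, n2, n3, n4]) h e⟩))))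
  · exact Or.inr (Or.inr (Or.inr (Or.inr (Or.inr ⟨e, pc_gen (s := [n1, n2, n3, n4, n5]) h e⟩))))

theorem pc5 {R : Type*} {a n1 n2 n3 n4 n5 : R} {l : List R}
    (h : List.Perm (a :: l) [n1, n2, n3, n4, n5]) :
    (a = n1 ∧ List.Perm l [n2, n3, n4, n5]) ∨ (a = n2 ∧ List.Perm l [n1, n3, n4, n5]) ∨
    (a = n3 ∧ List.Perm l [n1, n2, n4, n5]) ∨ (a = n4 ∧ List.Perm l [n1, n2, n3, n5]) ∨
    (a = n5 ∧ List.Perm l [n1, n2, n3, n4]) := by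
  have hm : a ∈ [n1, n2, n3, n4, n5] := h.subset (by simp)
  simp only [List.mem_cons, List.not_mem_nil, or_false] at hm
  rcases hm with e | e | e | e | e
  · exact Or.inl ⟨e, pc_gen (s := []) h e⟩
  · exact Or.inr (Or.inl ⟨e, pc_gen (s := [n1]) h e⟩)
  · exact Or.inr (Or.inr (Or.inl ⟨e, pc_gen (s := [n1, n2]) h e⟩))
  · exact Or.inr (Or.inr (Or.inr (Or.inl ⟨e, pc_gen (s := [n1, n2, n3]) h e⟩)))
  · exact Or.inr (Or.inr (Or.inr (Or.inr ⟨e, pc_gen (s := [n1, n2, n3, n4]) h e⟩)))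

theorem pc4 {R : Type*} {a n1 n2 n3 n4 : R} {l : List R}
    (h : List.Perm (a :: l) [n1, n2, n3, n4]) :
    (a = n1 ∧ List.Perm l [n2, n3, n4]) ∨ (a = n2 ∧ List.Perm l [n1, n3, n4]) ∨
    (a = n3 ∧ List.Perm l [n1, n2, n4]) ∨ (a = n4 ∧ List.Perm l [n1, n2, n3]) := by
  have hm : a ∈ [n1, n2, n3, n4] := h.subset (by simp)
  simp only [List.mem_cons, List.not_mem_nil, or_false] at hm
  rcases hm with e | e | e | e
  · exact Or.inl ⟨e, pc_gen (s := []) h e⟩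
  · exact Or.inr (Or.inl ⟨e, pc_gen (s := [n1]) h e⟩)
  · exact Or.inr (Or.inr (Or.inl ⟨e, pc_gen (s := [n1, n2]) h e⟩))
  · exact Or.inr (Or.inr (Or.inr ⟨e, pc_gen (s := [n1, n2, n3]) h e⟩))

theorem pc3 {R : Type*} {a n1 n2 n3 : R} {l : List R}
    (h : List.Perm (a :: l) [n1, n2, n3]) :
    (a = n1 ∧ List.Perm l [n2, n3]) ∨ (a = n2 ∧ List.Perm l [n1, n3]) ∨
    (a = n3 ∧ List.Perm l [n1, n2]) := by
  have hm : a ∈ [n1, n2, n3] := h.subset (by simp)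
  simp only [List.mem_cons, List.not_mem_nil, or_false] at hm
  rcases hm with e | e | e
  · exact Or.inl ⟨e, pc_gen (s := []) h e⟩
  · exact Or.inr (Or.inl ⟨e, pc_gen (s := [n1]) h e⟩)
  · exact Or.inr (Or.inr ⟨e, pc_gen (s := [n1, n2]) h e⟩)

theorem pc2 {R : Type*} {a b n1 n2 : R}
    (h : List.Perm [a, b] [n1, n2]) : (a = n1 ∧ b = n2) ∨ (a = n2 ∧ b = n1) := by
  have hm : a ∈ [n1, n2] := h.subset (by simp)
  simp only [List.mem_cons, List.not_mem_nil, or_false] at hm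
  rcases hm with e | e
  · exact Or.inl ⟨e, by simpa using pc_gen (s := []) h e⟩
  · exact Or.inr ⟨e, by simpa using pc_gen (s := [n1]) h e⟩

theorem core {R : Type*} [CommRing R] (a1 a2 a3 d1 d2 d3 : R)
    (h1 : d1 ≠ 0) (h2 : d2 ≠ 0) (h3 : d3 ≠ 0)
    (h12 : d1 - d2 ≠ 0) (h13 : d1 - d3 ≠ 0) (h23 : d2 - d3 ≠ 0)
    (g12 : d1 + d2 ≠ 0) (g13 : d1 + d3 ≠ 0) (g23 : d2 + d3 ≠ 0)
    (k12 : a1 - a2 ≠ 0) (k13 : a1 - a3 ≠ 0) (k23 : a2 - a3 ≠ 0)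
    (m12 : a1 - d1 - (a2 - d2) ≠ 0) (m13 : a1 - d1 - (a3 - d3) ≠ 0)
    (m23 : a2 - d2 - (a3 - d3) ≠ 0)
    (h : List.Perm [a1, a2 + d1 + d3, a3, a1 + d2 + d3, a2, a3 + d1 + d2]
      [a1 + d2, a1 + d3, a2 + d1, a2 + d3, a3 + d1, a3 + d2]) : 7 * d3 = 0 := by
  rcases pc6 h with ⟨e1, h⟩ | ⟨e1, h⟩ | ⟨e1, h⟩ | ⟨e1, h⟩ | ⟨e1, h⟩ | ⟨e1, h⟩ <;>
  try (exfalso; clear h; grind)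
  all_goals
    rcases pc5 h with ⟨e2, h⟩ | ⟨e2, h⟩ | ⟨e2, h⟩ | ⟨e2, h⟩ | ⟨e2, h⟩ <;>
    try (exfalso; clear h; grind)
  all_goals
    rcases pc4 h with ⟨e3, h⟩ | ⟨e3, h⟩ | ⟨e3, h⟩ | ⟨e3, h⟩ <;>
    try (exfalso; clear h; grind)
  all_goals
    rcases pc3 h with ⟨e4, h⟩ | ⟨e4, h⟩ | ⟨e4, h⟩ <;>
    try (exfalso; clear h; grind)
  all_goals
    rcases pc2 h with ⟨e5, e6⟩ | ⟨e5, e6⟩ <;> clear h <;>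
    first
      | grind
      | linear_combination 2 * (e2 - e5) + 3 * (e4 - e1) + (e1 + e3 + e5)

theorem mem_iff (p q : ℕ) (hp : 0 < p) (hq : 0 < q) (β : ℝ) :
    ∃ c : ℤ, ∀ m : ℤ, m ∈ beattySet ((p : ℝ) / (q : ℝ)) β ↔
      ∃ j : ℕ, j < q ∧ (q : ZMod p) * (m : ZMod p) + (c : ZMod p) + (j : ZMod p) = 0 := by
  refine ⟨⌈-(q * β)⌉, fun m => ?_⟩
  have hq' : (0 : ℝ) < q := by exact_mod_cast hq
  set c : ℤ := ⌈-(q * β)⌉ with hc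
  have key : ∀ n : ℤ, m = ⌊(p : ℝ) / q * n + β⌋ ↔ (q * m + c ≤ p * n ∧ p * n < q * m + c + q) := by
    intro n
    rw [eq_comm, Int.floor_eq_iff]
    have e : (p : ℝ) / q * n + β = (p * n + q * β) / q := by field_simp
    rw [e, le_div_iff₀ hq', div_lt_iff₀ hq']
    have A : (q * m + c ≤ p * n) ↔ c ≤ p * n - q * m := by constructor <;> intro h <;> linarith
    have B : (p * n < q * m + c + q) ↔ p * n - q * m - q < c := by
      constructor <;> intro h <;> linarith
    rw [A, B, hc, Int.ceil_le, Int.lt_ceil]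
    push_cast
    constructor <;> rintro ⟨h1, h2⟩ <;> constructor <;> linarith
  have mem : m ∈ beattySet ((p : ℝ) / (q : ℝ)) β ↔ ∃ n : ℤ, m = ⌊(p : ℝ) / q * n + β⌋ := Iff.rfl
  rw [mem]
  simp only [key]
  constructor
  · rintro ⟨n, h1, h2⟩
    refine ⟨(p * n - (q * m + c)).toNat, by omega, ?_⟩
    have : (((p * n - (q * m + c)).toNat : ℤ)) = p * n - (q * m + c) := Int.toNat_of_nonneg (by linarith)
    have h3 := congrArg (Int.cast : ℤ → ZMod p) this
    push_cast at h3
    rw [h3]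
    simp
  · rintro ⟨j, hj, h⟩
    have h3 : ((q * m + c + j : ℤ) : ZMod p) = 0 := by push_cast; exact h
    rw [ZMod.intCast_zmod_eq_zero_iff_dvd] at h3 <;> try exact ⟨hp.ne'⟩
    obtain ⟨n, hn⟩ := h3
    exact ⟨n, by omega, by omega⟩

noncomputable def gg (p q : ℕ) (y : ZMod p) : ℤ :=
  ∑ j ∈ Finset.range q, if y + (j : ZMod p) = 0 then 1 else 0

theorem gg_nonneg (p q : ℕ) (y : ZMod p) : 0 ≤ gg p q y :=
  Finset.sum_nonneg (fun _ _ => by split_ifs <;> norm_num)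

theorem gg_diff (p q : ℕ) (y : ZMod p) :
    gg p q y - gg p q (y + 1) = (if y = 0 then 1 else 0) - (if y + q = 0 then 1 else 0) := by
  unfold gg
  induction q with
  | zero => simp
  | succ n ih =>
    rw [Finset.sum_range_succ, Finset.sum_range_succ]
    have e : y + 1 + (n : ZMod p) = y + ((n + 1 : ℕ) : ZMod p) := by push_cast; ring
    rw [e]
    linarith

theorem gg_ind (p q : ℕ) (hq : q ≤ p) (y : ZMod p) :
    ((∃ j : ℕ, j < q ∧ y + (j : ZMod p) = 0) → gg p q y = 1) ∧
    ((¬ ∃ j : ℕ, j < q ∧ y + (j : ZMod p) = 0) → gg p q y = 0) := by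
  constructor
  · rintro ⟨j, hj, h⟩
    unfold gg
    rw [Finset.sum_eq_single j]
    · simp [h]
    · intro b hb hbj
      rw [if_neg]
      intro h'
      have : (b : ZMod p) = (j : ZMod p) := add_left_cancel (h'.trans h.symm)
      rw [ZMod.natCast_eq_natCast_iff'] at this
      rw [Finset.mem_range] at hb
      rw [Nat.mod_eq_of_lt (by omega), Nat.mod_eq_of_lt (by omega)] at this
      exact hbj this
    · intro h'
      exact absurd (Finset.mem_range.2 hj) h'
  · intro h
    unfold gg
    apply Finset.sum_eq_zero
    intro j hj
    rw [if_neg]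
    intro h'
    exact h ⟨j, Finset.mem_range.1 hj, h'⟩

/-- The data attached to one sequence. -/
theorem data (p q : ℕ) [NeZero p] (hq : 0 < q) (hqp : q < p) (hg : Nat.gcd p q = 1)
    (c : ℤ) : ∃ (f : ZMod p → ℤ) (a d : ZMod p),
      (∀ m : ℤ, (∃ j : ℕ, j < q ∧ (q : ZMod p) * (m : ZMod p) + (c : ZMod p) + (j : ZMod p) = 0) →
        f m = 1) ∧
      (∀ m : ℤ, (¬ ∃ j : ℕ, j < q ∧ (q : ZMod p) * (m : ZMod p) + (c : ZMod p) + (j : ZMod p) = 0) →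
        f m = 0) ∧
      (∀ x, 0 ≤ f x) ∧ d * q = 1 ∧
      (∀ x, f x - f (x + d) = (if x = a then 1 else 0) - (if x + 1 = a then 1 else 0)) ∧
      f a = 1 ∧ f (a + d - 1) = 1 ∧ ∑ x, f x = q := by
  have hd : (q : ZMod p) * (q : ZMod p)⁻¹ = 1 :=
    ZMod.coe_mul_inv_eq_one q (Nat.Coprime.symm hg)
  set d : ZMod p := (q : ZMod p)⁻¹ with hdd
  have hd' : d * q = 1 := by rw [mul_comm]; exact hd
  have hz : ∀ x b : ZMod p, q * x + b = 0 ↔ x = - (d * b) := by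
    intro x b
    constructor
    · intro h
      linear_combination d * h - x * hd'
    · intro h
      rw [h]
      linear_combination -b * hd
  refine ⟨fun x => gg p q (q * x + c), -(d * c), d, fun m h => (gg_ind p q hqp.le _).1 h,
    fun m h => (gg_ind p q hqp.le _).2 h, fun x => gg_nonneg _ _ _, hd', ?_, ?_, ?_, ?_⟩
  · intro x
    have e : (q : ZMod p) * (x + d) + c = q * x + c + 1 := by linear_combination hd
    simp only [e]
    rw [gg_diff]
    have e1 : (q : ZMod p) * x + c = 0 ↔ x = -(d * c) := hz x c
    have e2 : (q : ZMod p) * x + c + q = 0 ↔ x + 1 = -(d * c) := by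
      rw [← hz (x + 1) c]
      constructor <;> intro h <;> linear_combination h
    simp only [e1, e2]
  · refine (gg_ind p q hqp.le _).1 ⟨0, hq, ?_⟩
    push_cast
    linear_combination -(c : ZMod p) * hd
  · refine (gg_ind p q hqp.le _).1 ⟨q - 1, by omega, ?_⟩
    rw [Nat.cast_sub (by omega : 1 ≤ q)]
    push_cast
    linear_combination (-(c : ZMod p) + 1) * hd
  · simp only [gg]
    rw [Finset.sum_comm]
    have : ∀ j ∈ Finset.range q,
        (∑ x : ZMod p, if (q : ZMod p) * x + c + (j : ZMod p) = 0 then (1 : ℤ) else 0) = 1 := by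
      intro j _
      have e : ∀ x : ZMod p, (q : ZMod p) * x + c + (j : ZMod p) = 0 ↔ x = -(d * (c + j)) := by
        intro x
        rw [← hz, add_assoc]
      simp only [e]
      simp
    rw [Finset.sum_congr rfl this]
    simp

theorem bracket {R : Type*} [CommRing R] (f1 f2 f3 E1 E2 E3 : R → ℤ) (d1 d2 d3 : R)
    (hs : ∀ x, f1 x + f2 x + f3 x = 1)
    (h1 : ∀ x, f1 x - f1 (x + d1) = E1 x - E1 (x + 1))
    (h2 : ∀ x, f2 x - f2 (x + d2) = E2 x - E2 (x + 1))
    (h3 : ∀ x, f3 x - f3 (x + d3) = E3 x - E3 (x + 1)) (x : R) :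
    (E1 x + E2 (x + d1 + d3) + E3 x + E1 (x + d2 + d3) + E2 x + E3 (x + d1 + d2)) -
      (E1 (x + d2) + E1 (x + d3) + E2 (x + d1) + E2 (x + d3) + E3 (x + d1) + E3 (x + d2)) =
    (E1 (x + 1) + E2 (x + 1 + d1 + d3) + E3 (x + 1) + E1 (x + 1 + d2 + d3) + E2 (x + 1)
        + E3 (x + 1 + d1 + d2)) -
      (E1 (x + 1 + d2) + E1 (x + 1 + d3) + E2 (x + 1 + d1) + E2 (x + 1 + d3) + E3 (x + 1 + d1)
        + E3 (x + 1 + d2)) := by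
  have a1 := h1 x
  have a2 := h1 (x + d2)
  have a3 := h1 (x + d3)
  have a4 := h1 (x + d2 + d3)
  have b1 := h2 x
  have b2 := h2 (x + d1)
  have b3 := h2 (x + d3)
  have b4 := h2 (x + d1 + d3)
  have c1 := h3 x
  have c2 := h3 (x + d1)
  have c3 := h3 (x + d2)
  have c4 := h3 (x + d1 + d2)
  have s0 := hs x
  have s1 := hs (x + d1)
  have s2 := hs (x + d2)
  have s3 := hs (x + d3)
  have s12 := hs (x + d1 + d2)
  have s13 := hs (x + d1 + d3)
  have s23 := hs (x + d2 + d3)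
  have s123 := hs (x + d1 + d2 + d3)
  simp only [add_comm, add_left_comm, add_assoc] at *
  linarith

theorem const_of_step (p : ℕ) [NeZero p] (B : ZMod p → ℤ) (h : ∀ x, B x = B (x + 1))
    (hs : ∑ x, B x = 0) (x : ZMod p) : B x = 0 := by
  have h0 : ∀ n : ℕ, B (n : ZMod p) = B 0 := by
    intro n
    induction n with
    | zero => simp
    | succ n ih => rw [← ih, h (n : ZMod p)]; push_cast; rfl
  have h1 : ∀ y, B y = B 0 := by
    intro y
    have := h0 y.val
    rwa [ZMod.natCast_zmod_val] at this
  rw [Finset.sum_congr rfl (fun y _ => h1 y)] at hs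
  simp only [Finset.sum_const, Finset.card_univ, ZMod.card, nsmul_eq_mul, mul_eq_zero] at hs
  rw [h1 x]
  rcases hs with hs | hs
  · exact absurd (by exact_mod_cast hs) (NeZero.ne p)
  · exact hs

theorem not_full (p q q' : ℕ) (hp : 0 < p) (hq : 0 < q) (β β' : ℝ)
    (h : ∀ m : ℤ, m ∈ beattySet ((p : ℝ) / (q : ℝ)) β →
      m ∈ beattySet ((p : ℝ) / (q' : ℝ)) β' → False) : q < p := by
  by_contra hc
  push Not at hc
  obtain ⟨c, hm⟩ := mem_iff p q hp hq β
  refine h ⌊(p : ℝ) / q' * (0 : ℤ) + β'⌋ ?_ ⟨0, rfl⟩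
  rw [hm]
  haveI : NeZero p := ⟨hp.ne'⟩
  set y : ZMod p := (q : ZMod p) * ((⌊(p : ℝ) / q' * (0 : ℤ) + β'⌋ : ℤ) : ZMod p) + (c : ZMod p)
  refine ⟨(-y).val, lt_of_lt_of_le (ZMod.val_lt _) hc, ?_⟩
  rw [ZMod.natCast_zmod_val]
  ring

theorem fraenkel_three (p q1 q2 q3 : ℕ) (hp : 0 < p)
    (h12 : q2 < q1) (h23 : q3 < q2) (h3 : 1 ≤ q3)
    (hg1 : Nat.gcd p q1 = 1) (hg2 : Nat.gcd p q2 = 1) (hg3 : Nat.gcd p q3 = 1)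
    (β : Fin 3 → ℝ)
    (hcov : ∀ m : ℤ, ∃! i : Fin 3,
      m ∈ beattySet ((p : ℝ) / ((![q1, q2, q3] i : ℕ) : ℝ)) (β i)) :
    p = 7 ∧ q1 = 4 ∧ q2 = 2 ∧ q3 = 1 := by
  haveI : NeZero p := ⟨hp.ne'⟩
  have hlt : q1 < p := by
    apply not_full p q1 q2 hp (by omega) (β 0) (β 1)
    intro m ha hb
    have := (hcov m).unique (y₁ := 0) (y₂ := 1) ha hb
    exact absurd this (by decide)
  obtain ⟨c1, hc1⟩ := mem_iff p q1 hp (by omega) (β 0)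
  obtain ⟨c2, hc2⟩ := mem_iff p q2 hp (by omega) (β 1)
  obtain ⟨c3, hc3⟩ := mem_iff p q3 hp (by omega) (β 2)
  obtain ⟨f1, a1, d1, i1, o1, n1, hd1, e1, s1, t1, u1⟩ := data p q1 (by omega) hlt hg1 c1
  obtain ⟨f2, a2, d2, i2, o2, n2, hd2, e2, s2, t2, u2⟩ :=
    data p q2 (by omega) (by omega) hg2 c2
  obtain ⟨f3, a3, d3, i3, o3, n3, hd3, e3, s3, t3, u3⟩ :=
    data p q3 (by omega) (by omega) hg3 c3
  simp only [← hc1] at i1 o1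
  simp only [← hc2] at i2 o2
  simp only [← hc3] at i3 o3
  have hs : ∀ x, f1 x + f2 x + f3 x = 1 := by
    intro x
    obtain ⟨m, rfl⟩ := ZMod.intCast_surjective x
    obtain ⟨i, hi, hu⟩ := hcov m
    have k1 := hu 0
    have k2 := hu 1
    have k3 := hu 2
    fin_cases i
    · rw [i1 m hi, o2 m (fun h => absurd (k2 h) (by decide)),
        o3 m (fun h => absurd (k3 h) (by decide))]; rfl
    · rw [i2 m hi, o1 m (fun h => absurd (k1 h) (by decide)),
        o3 m (fun h => absurd (k3 h) (by decide))]; rfl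
    · rw [i3 m hi, o1 m (fun h => absurd (k1 h) (by decide)),
        o2 m (fun h => absurd (k2 h) (by decide))]; rfl
  have hsum : q1 + q2 + q3 = p := by
    have : ∑ x : ZMod p, (f1 x + f2 x + f3 x) = p := by
      rw [Finset.sum_congr rfl (fun x _ => hs x)]; simp
    rw [Finset.sum_add_distrib, Finset.sum_add_distrib, u1, u2, u3] at this
    exact_mod_cast this
  set E1 : ZMod p → ℤ := fun x => if x = a1 then 1 else 0 with hE1
  set E2 : ZMod p → ℤ := fun x => if x = a2 then 1 else 0 with hE2
  set E3 : ZMod p → ℤ := fun x => if x = a3 then 1 else 0 with hE3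
  have hB := const_of_step p _ (bracket f1 f2 f3 E1 E2 E3 d1 d2 d3 hs e1 e2 e3) (by
    have sh : ∀ (E : ZMod p → ℤ) (d : ZMod p), ∑ x, E (x + d) = ∑ x, E x :=
      fun E d => Equiv.sum_comp (Equiv.addRight d) E
    simp only [Finset.sum_sub_distrib, Finset.sum_add_distrib, add_assoc, sh]
    ring)
  have hperm : List.Perm [a1, a2 + -d1 + -d3, a3, a1 + -d2 + -d3, a2, a3 + -d1 + -d2]
      [a1 + -d2, a1 + -d3, a2 + -d1, a2 + -d3, a3 + -d1, a3 + -d2] := by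
    rw [List.perm_iff_count]
    intro x
    have := hB x
    have v : ∀ a d : ZMod p, x + d = a ↔ a + -d = x := by
      intro a d
      constructor <;> intro h
      · rw [← h]; ring
      · rw [← h]; ring
    have v0 : ∀ a : ZMod p, x = a ↔ a = x := fun a => eq_comm
    have w : ∀ a d d' : ZMod p, x + d + d' = a ↔ a + -d + -d' = x := by
      intro a d d'
      constructor <;> intro h
      · rw [← h]; ring
      · rw [← h]; ring
    simp only [hE1, hE2, hE3, w, v] at this
    simp only [v0 a1, v0 a2, v0 a3] at this
    simp only [List.count_cons, List.count_nil, beq_iff_eq]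
    zify
    push_cast
    linarith
  have unq : ∀ {q d : ZMod p}, d * q = 1 → d ≠ 0 := by
    rintro q d h rfl
    rw [zero_mul] at h
    haveI : Fact (1 < p) := ⟨by omega⟩
    exact zero_ne_one h
  have hne : ∀ {q q' : ℕ} {d d' : ZMod p}, d * q = 1 → d' * q' = 1 → q' < q → q < p →
      -d - -d' ≠ 0 := by
    intro q q' d d' h h' hl hl' e
    have : (q : ZMod p) = (q' : ZMod p) := by
      linear_combination (-(q : ZMod p)) * h' + q' * h + q * q' * e
    rw [ZMod.natCast_eq_natCast_iff', Nat.mod_eq_of_lt hl', Nat.mod_eq_of_lt (by omega)] at this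
    omega
  have hne' : ∀ {q q' : ℕ} {d d' : ZMod p}, d * q = 1 → d' * q' = 1 → 0 < q → q + q' < p →
      -d + -d' ≠ 0 := by
    intro q q' d d' h h' hl hl' e
    have : ((q + q' : ℕ) : ZMod p) = 0 := by
      push_cast
      linear_combination (-(q : ZMod p)) * h' - q' * h - q * q' * e
    rw [ZMod.natCast_eq_zero_iff] at this
    have := Nat.le_of_dvd (by omega) this
    omega
  have hx : ∀ x y, x - y = 0 → f1 x = 1 → f2 y = 1 → False := by
    intro x y h a b
    rw [← sub_eq_zero.1 h] at b
    have := hs x; have := n3 x; omega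
  have hy : ∀ x y, x - y = 0 → f1 x = 1 → f3 y = 1 → False := by
    intro x y h a b
    rw [← sub_eq_zero.1 h] at b
    have := hs x; have := n2 x; omega
  have hz : ∀ x y, x - y = 0 → f2 x = 1 → f3 y = 1 → False := by
    intro x y h a b
    rw [← sub_eq_zero.1 h] at b
    have := hs x; have := n1 x; omega
  have h7 := core a1 a2 a3 (-d1) (-d2) (-d3) (neg_ne_zero.2 (unq hd1)) (neg_ne_zero.2 (unq hd2))
    (neg_ne_zero.2 (unq hd3)) (hne hd1 hd2 h12 hlt) (hne hd1 hd3 (by omega) hlt)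
    (hne hd2 hd3 h23 (by omega)) (hne' hd1 hd2 (by omega) (by omega))
    (hne' hd1 hd3 (by omega) (by omega)) (hne' hd2 hd3 (by omega) (by omega))
    (fun h => hx _ _ h s1 s2) (fun h => hy _ _ h s1 s3) (fun h => hz _ _ h s2 s3)
    (fun h => hx _ _ (by linear_combination h) t1 t2)
    (fun h => hy _ _ (by linear_combination h) t1 t3)
    (fun h => hz _ _ (by linear_combination h) t2 t3) hperm
  have h7' : ((7 : ℕ) : ZMod p) = 0 := by
    push_cast
    linear_combination (-(q3 : ZMod p)) * h7 - 7 * hd3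
  rw [ZMod.natCast_eq_zero_iff] at h7'
  have := (Nat.dvd_prime (by norm_num : Nat.Prime 7)).1 h7'
  omega
end

section
/- Let p be a positive integer, d a residue with gcd(p, d) = 1, a any residue, and q a positive integer with q < p, and consider the TG-sequence with points {(a + id) mod p : i = 0, …, q−1}. Then the number of distinct gap sizes of this TG-sequence is at most 3, and if it equals 3 then the largest gap size equals the sum of the other two gap sizes. -/
/-- For a set `B` of residues in `{0, …, p−1}` and a point `x`, the size of the
(cyclic) gap from `x` to the next point of `B` modulo `p`: the least `t > 0`
with `(x + t) mod p ∈ B`.  For `x ∈ B` this recovers the differences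
`a_{i+1} − a_i` of the sorted points, together with the wrap-around gap
`p + a_1 − a_q`. -/
noncomputable def gapAt (p : ℕ) (B : Finset ℕ) (x : ℕ) : ℕ :=
  sInf {t : ℕ | 0 < t ∧ (x + t) % p ∈ B}

/-- The set of gap sizes of `B` as a subset of residues modulo `p`. -/
noncomputable def gapSizes (p : ℕ) (B : Finset ℕ) : Finset ℕ :=
  B.image (gapAt p B)

lemma exists_min_step (p d q : ℕ) (e : ℤ) (hp : 0 < p) (hq : 2 ≤ q)
    (hcop : IsCoprime (p : ℤ) e) :
    ∃ α u : ℤ, 0 < α ∧ 1 ≤ u ∧ u < q ∧ (p : ℤ) ∣ α - u * e ∧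
      ∀ t k : ℤ, 0 < t → 1 ≤ k → k < q → (p : ℤ) ∣ t - k * e → α ≤ t := by
  classical
  have hex : ∃ n : ℕ, 0 < n ∧ ∃ u : ℤ, 1 ≤ u ∧ u < q ∧ (p : ℤ) ∣ (n : ℤ) - u * e := by
    have h0 : 0 ≤ e % (p : ℤ) := Int.emod_nonneg _ (by omega)
    refine ⟨(e % (p : ℤ)).toNat + p, by omega, 1, le_refl _, by omega, ?_⟩
    push_cast
    rw [Int.toNat_of_nonneg h0]
    have h1 := Int.emod_add_mul_ediv e p
    refine ⟨1 - e / p, ?_⟩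
    linear_combination h1
  obtain ⟨h0, u, hu1, hu2, hu3⟩ := Nat.find_spec hex
  refine ⟨(Nat.find hex : ℕ), u, by exact_mod_cast h0, hu1, hu2, hu3, ?_⟩
  intro t k ht hk1 hk2 hk3
  have := Nat.find_min' hex (m := t.toNat) ⟨by omega, k, hk1, hk2, by
    rwa [Int.toNat_of_nonneg ht.le]⟩
  omega

lemma not_dvd_step (p q : ℕ) (e k : ℤ) (hqp : q < p) (hcop : IsCoprime (p : ℤ) e)
    (hk1 : 1 ≤ k) (hk2 : k < q) : ¬ (p : ℤ) ∣ k * e := by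
  intro h
  have h1 := hcop.dvd_of_dvd_mul_right h
  have := Int.le_of_dvd (by omega) h1
  omega

lemma far_step (p q : ℕ) (e α u β v t l : ℤ) (hqp : q < p) (hcop : IsCoprime (p : ℤ) e)
    (hv2 : v < q) (hv3 : (p : ℤ) ∣ β - v * e)
    (hβ : ∀ t k : ℤ, 0 < t → 1 ≤ k → k < q → (p : ℤ) ∣ t - k * e → β ≤ t)
    (hα : ∀ t k : ℤ, 0 < t → 1 ≤ k → k < q → (p : ℤ) ∣ t - k * (-e) → α ≤ t)
    (ht : 0 < t) (hl1 : 1 ≤ l) (hl2 : l < v) (hl : (p : ℤ) ∣ t - l * e) : α + β ≤ t := by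
  have h1 := hβ t l ht hl1 (by omega) hl
  have h2 : (p : ℤ) ∣ (t - β) - (v - l) * (-e) := by
    have := dvd_sub hl hv3
    have e1 : (t - β) - (v - l) * (-e) = t - l * e - (β - v * e) := by ring
    rwa [e1]
  rcases h1.lt_or_eq with h | h
  · have := hα (t - β) (v - l) (by omega) (by omega) (by omega) h2
    omega
  · exfalso
    apply not_dvd_step p q e (v - l) hqp hcop (by omega) (by omega)
    have e1 : (t - β) - (v - l) * (-e) = (v - l) * e := by rw [h]; ring
    rwa [e1] at h2

lemma gap_three (p q : ℕ) (e : ℤ) (hp : 0 < p) (hq : 2 ≤ q) (hqp : q < p)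
    (hcop : IsCoprime (p : ℤ) e) :
    ∃ α β : ℕ, 0 < α ∧ 0 < β ∧ ∀ i : ℕ, i < q → ∀ S : Set ℕ,
      (∀ t : ℕ, t ∈ S ↔ 0 < t ∧ ∃ j : ℕ, j < q ∧ (p : ℤ) ∣ (t : ℤ) - ((j : ℤ) - i) * e) →
      sInf S = α ∨ sInf S = β ∨ sInf S = α + β := by
  obtain ⟨α, u, hα0, hu1, hu2, hu3, hα⟩ := exists_min_step p 0 q e hp hq hcop
  obtain ⟨β, v, hβ0, hv1, hv2, hv3, hβ⟩ := exists_min_step p 0 q (-e) hp hq hcop.neg_right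
  have hfarneg : ∀ t l : ℤ, 0 < t → 1 ≤ l → l < v → (p : ℤ) ∣ t - l * (-e) → α + β ≤ t :=
    fun t l h1 h2 h3 h4 => far_step p q (-e) α u β v t l hqp hcop.neg_right hv2 hv3 hβ
      (by simpa using hα) h1 h2 h3 h4
  have hfarpos : ∀ t l : ℤ, 0 < t → 1 ≤ l → l < u → (p : ℤ) ∣ t - l * e → α + β ≤ t := by
    intro t l h1 h2 h3 h4
    have := far_step p q e β v α u t l hqp hcop hu2 hu3 hα hβ h1 h2 h3 h4
    omega
  have hαp : α < p := by
    rcases lt_trichotomy α p with h | h | h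
    · exact h
    · exfalso
      apply not_dvd_step p q e u hqp hcop hu1 hu2
      rw [h] at hu3
      exact (dvd_sub_right (dvd_refl _)).1 hu3
    · have := hα (α - p) u (by omega) hu1 hu2 (by
        have := dvd_sub hu3 (dvd_refl (p : ℤ))
        have e1 : α - p - u * e = α - u * e - p := by ring
        rwa [e1])
      omega
  have hsum : α + β ≤ p := by
    have := hβ (p - α) u (by omega) hu1 hu2 (by
        have := dvd_sub (dvd_refl (p : ℤ)) hu3
        have e1 : p - α - u * (-e) = p - (α - u * e) := by ring
        rwa [e1])
    omega
  have hzero : ∀ t : ℤ, 0 < t → (p : ℤ) ∣ t → α + β ≤ t := by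
    intro t h1 h2
    have := Int.le_of_dvd h1 h2
    omega
  refine ⟨α.toNat, β.toNat, by omega, by omega, ?_⟩
  intro i hi S hS
  have key : ∀ m : ℤ, 0 < m → (∃ j : ℤ, 0 ≤ j ∧ j < q ∧ (p : ℤ) ∣ m - (j - i) * e) →
      m ≤ α + β →
      (∀ t k : ℤ, 0 < t → 1 ≤ k → k < q - i → (p : ℤ) ∣ t - k * e → m ≤ t) →
      (∀ t k : ℤ, 0 < t → 1 ≤ k → k ≤ i → (p : ℤ) ∣ t - k * (-e) → m ≤ t) →
      sInf S = m.toNat := by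
    rintro m hm ⟨j, hj0, hjq, hj⟩ hms hpos hneg
    have hl : IsLeast S m.toNat := by
      constructor
      · rw [hS]
        refine ⟨by omega, j.toNat, by omega, ?_⟩
        rwa [Int.toNat_of_nonneg hm.le, Int.toNat_of_nonneg hj0]
      · intro t ht
        rw [hS] at ht
        obtain ⟨ht0, j', hj', hd⟩ := ht
        have ht0' : (0 : ℤ) < t := by exact_mod_cast ht0
        rcases lt_trichotomy j' i with h | h | h
        · have := hneg t ((i : ℤ) - j') ht0' (by omega) (by omega) (by
            have e1 : (t : ℤ) - ((i : ℤ) - j') * (-e) = t - ((j' : ℤ) - i) * e := by ring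
            rwa [e1])
          omega
        · subst h
          have := hzero t ht0' (by simpa using hd)
          omega
        · have := hpos t ((j' : ℤ) - i) ht0' (by omega) (by omega) hd
          omega
    exact hl.csInf_eq
  have memα : (i : ℤ) + u < q → ∃ j : ℤ, 0 ≤ j ∧ j < q ∧ (p : ℤ) ∣ α - (j - i) * e :=
    fun h => ⟨i + u, by omega, h, by simpa using hu3⟩
  have memβ : v ≤ i → ∃ j : ℤ, 0 ≤ j ∧ j < q ∧ (p : ℤ) ∣ β - (j - i) * e :=
    fun h => ⟨i - v, by omega, by omega, by simpa using hv3⟩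
  have hαw : ∀ t k : ℤ, 0 < t → 1 ≤ k → k < q - i → (p : ℤ) ∣ t - k * e → α ≤ t :=
    fun t k h1 h2 h3 h4 => hα t k h1 h2 (by omega) h4
  have hβw : ∀ t k : ℤ, 0 < t → 1 ≤ k → k ≤ i → (p : ℤ) ∣ t - k * (-e) → β ≤ t :=
    fun t k h1 h2 h3 h4 => hβ t k h1 h2 (by omega) h4
  by_cases c1 : (i : ℤ) + u < q <;> by_cases c2 : v ≤ i
  · rcases le_total α β with h | h
    · exact Or.inl (key α hα0 (memα c1) (by omega) hαw
        (fun t k h1 h2 h3 h4 => h.trans (hβw t k h1 h2 h3 h4)))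
    · exact Or.inr (Or.inl (key β hβ0 (memβ c2) (by omega)
        (fun t k h1 h2 h3 h4 => h.trans (hαw t k h1 h2 h3 h4)) hβw))
  · refine Or.inl (key α hα0 (memα c1) (by omega) hαw ?_)
    intro t k h1 h2 h3 h4
    have := hfarneg t k h1 h2 (by omega) h4
    omega
  · refine Or.inr (Or.inl (key β hβ0 (memβ c2) (by omega) ?_ hβw))
    intro t k h1 h2 h3 h4
    have := hfarpos t k h1 h2 (by omega) h4
    omega
  · refine Or.inr (Or.inr ?_)
    rw [← Int.toNat_add hα0.le hβ0.le]
    refine key (α + β) (by omega) ⟨i + u - v, by omega, by omega, ?_⟩ le_rfl ?_ ?_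
    · have := dvd_add hu3 hv3
      have e1 : α + β - (i + u - v - i) * e = α - u * e + (β - v * (-e)) := by ring
      rwa [e1]
    · intro t k h1 h2 h3 h4
      exact hfarpos t k h1 h2 (by omega) h4
    · intro t k h1 h2 h3 h4
      exact hfarneg t k h1 h2 (by omega) h4

/-- The Three Gap Theorem: a TG-sequence `{(a + i d) mod p : 0 ≤ i < q}` with
`gcd(p, d) = 1` and `0 < q < p` has at most `3` distinct gap sizes, and if it
has exactly `3` then the largest gap size is the sum of the other two. -/
theorem three_gap (p d a q : ℕ) (hp : 0 < p) (hd : Nat.gcd p d = 1)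
    (hq : 0 < q) (hqp : q < p)
    (B : Finset ℕ) (hB : B = (Finset.range q).image (fun i => (a + i * d) % p)) :
    (gapSizes p B).card ≤ 3 ∧
    ((gapSizes p B).card = 3 →
      ∃ g1 g2 g3, g1 < g2 ∧ g2 < g3 ∧ gapSizes p B = {g1, g2, g3} ∧
        g3 = g1 + g2) := by
  rcases Nat.lt_or_ge q 2 with h2 | h2
  · have hc : (gapSizes p B).card ≤ 1 := by
      refine Finset.card_image_le.trans ?_
      rw [hB]
      refine Finset.card_image_le.trans ?_
      rw [Finset.card_range]; omega
    exact ⟨by omega, fun h => by omega⟩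
  have hcop : IsCoprime (p : ℤ) (d : ℤ) := Nat.isCoprime_iff_coprime.2 hd
  obtain ⟨α, β, hα, hβ, H⟩ := gap_three p q d hp h2 hqp hcop
  have hsub : gapSizes p B ⊆ {α, β, α + β} := by
    intro g hg
    simp only [gapSizes, Finset.mem_image] at hg
    obtain ⟨x, hx, rfl⟩ := hg
    rw [hB, Finset.mem_image] at hx
    obtain ⟨i, hi, rfl⟩ := hx
    have hi' := Finset.mem_range.1 hi
    have := H i hi' {t : ℕ | 0 < t ∧ ((a + i * d) % p + t) % p ∈ B} (by
      intro t
      simp only [Set.mem_setOf_eq, hB, Finset.mem_image, Finset.mem_range, Nat.mod_add_mod]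
      refine and_congr_right fun _ => exists_congr fun j => and_congr_right fun _ => ?_
      change (a + j * d) ≡ (a + i * d + t) [MOD p] ↔ _
      rw [Nat.modEq_iff_dvd]
      push_cast
      have e1 : (a + i * d + t - (a + j * d) : ℤ) = t - (j - i) * d := by ring
      rw [e1])
    simp only [Finset.mem_insert, Finset.mem_singleton]
    exact this
  have hle : ({α, β, α + β} : Finset ℕ).card ≤ 3 := Finset.card_le_three
  refine ⟨(Finset.card_le_card hsub).trans hle, fun h3 => ?_⟩
  have heq : gapSizes p B = {α, β, α + β} := Finset.eq_of_subset_of_card_le hsub (by omega)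
  rcases lt_trichotomy α β with h | h | h
  · exact ⟨α, β, α + β, h, by omega, heq, rfl⟩
  · exfalso
    subst h
    rw [heq] at h3
    have : ({α, α, α + α} : Finset ℕ).card ≤ 2 := by
      rw [Finset.insert_idem]; exact Finset.card_le_two
    omega
  · exact ⟨β, α, α + β, h, by omega, by rw [heq, Finset.insert_comm], by omega⟩
end

section
/- Let p be a positive integer and q1 > q2 > q3 > q4 ≥ 1 be integers with gcd(p, q_i) = 1 for i = 1,2,3,4. If the four rational Beatty sequences S(p/q_i, β_i), i = 1,2,3,4, form a disjoint covering system of the integers, then q2 = 2·q3. -/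
/-- trigonometric inequality -/
theorem bf_trig (x : ℝ) (h0 : 0 < x) (h1 : x ≤ 0.2857) :
    1 / Real.sin (3 * x) + 1 / Real.sin (4 * x) + 1 / Real.sin (5 * x) < 1 / Real.sin x := by
  have hsx : 0 < Real.sin x := Real.sin_pos_of_pos_of_lt_pi h0 (by linarith [Real.pi_gt_three])
  have hle : Real.sin x ≤ 0.2857 := (Real.sin_lt h0).le.trans h1
  set s := Real.sin x with hs
  have hsc : s ^ 2 + Real.cos x ^ 2 = 1 := Real.sin_sq_add_cos_sq x
  have hs2 : s ^ 2 ≤ 0.0817 := by nlinarith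
  have hc0 : 0 < Real.cos x := Real.cos_pos_of_mem_Ioo ⟨by linarith [Real.pi_gt_three], by linarith [Real.pi_gt_three]⟩
  set c := Real.cos x with hc
  have hc1 : 0.958 ≤ c := by
    by_contra h
    push Not at h
    nlinarith
  have e3 : Real.sin (3 * x) = s * (3 - 4 * s ^ 2) := by
    rw [Real.sin_three_mul]; ring
  have e4 : Real.sin (4 * x) = s * (4 * c * (1 - 2 * s ^ 2)) := by
    rw [show 4 * x = 2 * (2 * x) by ring, Real.sin_two_mul, Real.sin_two_mul, Real.cos_two_mul]
    rw [← hs, ← hc, show c ^ 2 = 1 - s ^ 2 by linarith]; ring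
  have e5 : Real.sin (5 * x) = s * (16 * (s ^ 2) ^ 2 - 20 * s ^ 2 + 5) := by
    rw [show 5 * x = 3 * x + 2 * x by ring, Real.sin_add, Real.sin_three_mul, Real.cos_three_mul,
      Real.sin_two_mul, Real.cos_two_mul, ← hs, ← hc]
    have : c ^ 4 = (1 - s ^ 2) ^ 2 := by rw [← show c ^ 2 = 1 - s ^ 2 by linarith]; ring
    have h2 : c ^ 2 = 1 - s ^ 2 := by linarith
    linear_combination (-8 * s ^ 3) * h2 + 8 * s * this
  have b3 : s * 2.67 ≤ Real.sin (3 * x) := by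
    rw [e3]; exact mul_le_mul_of_nonneg_left (by nlinarith) hsx.le
  have b4 : s * 3.2 ≤ Real.sin (4 * x) := by
    rw [e4]; exact mul_le_mul_of_nonneg_left (by nlinarith) hsx.le
  have b5 : s * 3.3 ≤ Real.sin (5 * x) := by
    rw [e5]; exact mul_le_mul_of_nonneg_left (by nlinarith [sq_nonneg (s^2)]) hsx.le
  have i3 := one_div_le_one_div_of_le (by positivity) b3
  have i4 := one_div_le_one_div_of_le (by positivity) b4
  have i5 := one_div_le_one_div_of_le (by positivity) b5
  have : 1 / (s * 2.67) + 1 / (s * 3.2) + 1 / (s * 3.3) < 1 / s := by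
    have hi : 0 < 1 / s := by positivity
    have t : ∀ a : ℝ, 1 / (s * a) = (1 / s) * (1 / a) := fun a => by
      rw [one_div_mul_one_div]
    rw [t, t, t]
    nlinarith
  linarith

theorem bf_mono (p a b : ℕ) (hp : 11 ≤ p) (ha : 1 ≤ a) (hab : a ≤ b) (hb : 2 * b ≤ p) :
    1 / Real.sin (b * (Real.pi / p)) ≤ 1 / Real.sin (a * (Real.pi / p)) := by
  have hpp : (0 : ℝ) < p := by positivity
  have hx : 0 < Real.pi / p := by positivity
  have ha' : (1 : ℝ) ≤ a := by exact_mod_cast ha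
  have hab' : (a : ℝ) ≤ b := by exact_mod_cast hab
  have hb' : 2 * (b : ℝ) ≤ p := by exact_mod_cast hb
  have hbx : (b : ℝ) * (Real.pi / p) ≤ Real.pi / 2 := by
    rw [mul_div_assoc', div_le_div_iff₀ hpp two_pos]
    nlinarith [Real.pi_pos]
  have h1 : 0 < (a : ℝ) * (Real.pi / p) := by positivity
  have h2 : (a : ℝ) * (Real.pi / p) ≤ b * (Real.pi / p) := by gcongr
  apply one_div_le_one_div_of_le
  · exact Real.sin_pos_of_pos_of_lt_pi h1 (by linarith [Real.pi_pos])
  · exact Real.sin_le_sin_of_le_of_le_pi_div_two (by linarith [Real.pi_pos]) hbx h2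

theorem bf_sorted (p a b c : ℕ) (hp : 11 ≤ p) (ha : 3 ≤ a) (hab : a < b) (hbc : b < c)
    (hc : 2 * c ≤ p) :
    1 / Real.sin (a * (Real.pi / p)) + 1 / Real.sin (b * (Real.pi / p))
      + 1 / Real.sin (c * (Real.pi / p)) < 1 / Real.sin (Real.pi / p) := by
  have h3 := bf_mono p 3 a hp (by norm_num) ha (by omega)
  have h4 := bf_mono p 4 b hp (by norm_num) (by omega) (by omega)
  have h5 := bf_mono p 5 c hp (by norm_num) (by omega) (by omega)
  have hpp : (11 : ℝ) ≤ p := by exact_mod_cast hp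
  have := bf_trig (Real.pi / p) (by positivity) (by
    rw [div_le_iff₀ (by linarith)]
    nlinarith [Real.pi_lt_d4])
  push_cast at h3 h4 h5
  linarith

theorem bf_unsorted (p : ℕ) (hp : 11 ≤ p) (m : Fin 3 → ℕ) (hm : Function.Injective m)
    (h3 : ∀ i, 3 ≤ m i) (h2 : ∀ i, 2 * m i ≤ p) :
    ∑ i, 1 / Real.sin (m i * (Real.pi / p)) < 1 / Real.sin (Real.pi / p) := by
  rw [Fin.sum_univ_three]
  have n01 : m 0 ≠ m 1 := hm.ne (by decide)
  have n02 : m 0 ≠ m 2 := hm.ne (by decide)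
  have n12 : m 1 ≠ m 2 := hm.ne (by decide)
  have k := fun i j l => bf_sorted p (m i) (m j) (m l) hp (h3 i)
  rcases lt_or_gt_of_ne n01 with h | h <;> rcases lt_or_gt_of_ne n02 with h' | h' <;>
    rcases lt_or_gt_of_ne n12 with h'' | h''
  · linarith [k 0 1 2 h h'' (h2 _)]
  · linarith [k 0 2 1 h' h'' (h2 _)]
  · omega
  · linarith [k 2 0 1 h' h (h2 _)]
  · linarith [k 1 0 2 h h' (h2 _)]
  · omega
  · linarith [k 1 2 0 h'' h' (h2 _)]
  · linarith [k 2 1 0 h'' h (h2 _)]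

theorem bf_norm (p : ℕ) [NeZero p] (v : ZMod p) :
    ‖ZMod.stdAddChar v - 1‖ = 2 * Real.sin (v.valMinAbs.natAbs * (Real.pi / p)) := by
  have hp : (0 : ℝ) < p := by exact_mod_cast Nat.pos_of_ne_zero (NeZero.ne p)
  have e : ‖ZMod.stdAddChar v - 1‖ = ‖2 * Real.sin (v.valMinAbs * (Real.pi / p))‖ := by
    conv_lhs => rw [← ZMod.coe_valMinAbs v]
    rw [ZMod.stdAddChar_coe]
    have := Complex.norm_exp_I_mul_ofReal_sub_one (2 * Real.pi * v.valMinAbs / p)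
    rw [show 2 * Real.pi * v.valMinAbs / p / 2 = v.valMinAbs * (Real.pi / p) by ring] at this
    rw [← this]
    congr 3
    push_cast
    ring
  have hle : (v.valMinAbs.natAbs : ℝ) * (Real.pi / p) ≤ Real.pi / 2 := by
    have := ZMod.natAbs_valMinAbs_le v
    have h2 : 2 * v.valMinAbs.natAbs ≤ p := by omega
    have h2' : 2 * (v.valMinAbs.natAbs : ℝ) ≤ p := by exact_mod_cast h2
    rw [mul_div_assoc', div_le_div_iff₀ hp two_pos]
    nlinarith [Real.pi_pos]
  have hnn : 0 ≤ Real.sin (v.valMinAbs.natAbs * (Real.pi / p)) :=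
    Real.sin_nonneg_of_nonneg_of_le_pi (by positivity) (by linarith [Real.pi_pos])
  rw [e, norm_mul]
  rcases Int.natAbs_eq v.valMinAbs with h | h
  · have h' : (v.valMinAbs : ℝ) = (v.valMinAbs.natAbs : ℝ) := by
      rw [← Int.cast_natCast, ← h]
    rw [h', Real.norm_of_nonneg hnn]; simp
  · have h' : (v.valMinAbs : ℝ) = -(v.valMinAbs.natAbs : ℝ) := by
      rw [← Int.cast_natCast, ← Int.cast_neg, ← h]
    rw [h', neg_mul, Real.sin_neg, norm_neg, Real.norm_of_nonneg hnn]; simp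

theorem bf_mem (p q : ℕ) (hq : 0 < q) (β : ℝ) (m : ℤ) :
    m ∈ beattySet ((p : ℝ) / (q : ℝ)) β ↔
      ∃ t < q, (q : ZMod p) * (m : ZMod p) = (⌊(q : ℝ) * β⌋ : ZMod p) - (t : ZMod p) := by
  have hq' : (0 : ℝ) < q := by exact_mod_cast hq
  have key : ∀ n : ℤ, m = ⌊(p : ℝ) / q * n + β⌋ ↔
      (q * m ≤ p * n + ⌊(q : ℝ) * β⌋ ∧ p * n + ⌊(q : ℝ) * β⌋ < q * m + q) := by
    intro n
    rw [eq_comm, Int.floor_eq_iff]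
    have e : (p : ℝ) / q * n + β = (p * n + q * β) / q := by field_simp
    rw [e, le_div_iff₀ hq', div_lt_iff₀ hq']
    have e2 : p * n + ⌊(q : ℝ) * β⌋ = ⌊((p * n : ℤ) : ℝ) + q * β⌋ := by
      rw [Int.floor_intCast_add]
    rw [e2, Int.le_floor, Int.floor_lt]
    push_cast
    rw [show ((m : ℝ) + 1) * q = q * m + q by ring, mul_comm (m : ℝ)]
  constructor
  · rintro ⟨n, hn⟩
    obtain ⟨h1, h2⟩ := (key n).1 hn
    refine ⟨(p * n + ⌊(q : ℝ) * β⌋ - q * m).toNat, by omega, ?_⟩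
    have : (((p * n + ⌊(q : ℝ) * β⌋ - q * m).toNat : ℤ) : ZMod p)
       = ((p * n + ⌊(q : ℝ) * β⌋ - q * m : ℤ) : ZMod p) := by
      rw [Int.toNat_of_nonneg (by linarith)]
    push_cast at this
    rw [this]
    simp
  · rintro ⟨t, ht, h⟩
    have h' : ((q * m : ℤ) : ZMod p) = ((⌊(q : ℝ) * β⌋ - t : ℤ) : ZMod p) := by
      push_cast; exact h
    rw [ZMod.intCast_eq_intCast_iff_dvd_sub] at h'
    obtain ⟨c, hc⟩ := h'
    refine ⟨-c, (key _).2 ⟨?_, ?_⟩⟩ <;>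
    · rw [show (p : ℤ) * -c = -(p * c) by ring, ← hc]
      omega

theorem bf_lt (p : ℕ) (hp : 0 < p) (q : Fin 4 → ℕ) (hq : ∀ i, 0 < q i) (β : Fin 4 → ℝ)
    (hcov : ∀ m : ℤ, ∃! i : Fin 4, m ∈ beattySet ((p : ℝ) / (q i : ℝ)) (β i)) (i : Fin 4) :
    q i < p := by
  by_contra h
  push Not at h
  obtain ⟨j, hj⟩ : ∃ j, j ≠ i := exists_ne i
  have h1 : ⌊(p : ℝ) / (q j : ℝ) * (0 : ℤ) + β j⌋ ∈ beattySet ((p : ℝ) / (q j : ℝ)) (β j) := ⟨0, rfl⟩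
  set m := ⌊(p : ℝ) / (q j : ℝ) * (0 : ℤ) + β j⌋
  have h2 : m ∈ beattySet ((p : ℝ) / (q i : ℝ)) (β i) := by
    rw [bf_mem p (q i) (hq i)]
    have : NeZero p := ⟨hp.ne'⟩
    refine ⟨((⌊(q i : ℝ) * β i⌋ : ZMod p) - q i * m).val, (ZMod.val_lt _).trans_le h, ?_⟩
    rw [ZMod.natCast_zmod_val]; ring
  exact hj ((hcov m).unique h1 h2)

theorem bf_sum (p : ℕ) [NeZero p] (q : Fin 4 → ℕ) (hlt : ∀ i, q i < p)
    (u : Fin 4 → ZMod p) (hu : ∀ i, u i * q i = 1) (b : Fin 4 → ZMod p)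
    (hcov : ∀ x : ZMod p, ∃! i : Fin 4, ∃ t < q i, (q i : ZMod p) * x = b i - (t : ZMod p))
    (F : ZMod p → ℂ) :
    ∑ i, ∑ t ∈ Finset.range (q i), F (u i * (b i - t)) = ∑ x, F x := by
  classical
  have hA : ∀ i x, (∃ t < q i, (q i : ZMod p) * x = b i - (t : ZMod p)) ↔
      x ∈ (Finset.range (q i)).image (fun t : ℕ => u i * (b i - (t : ZMod p))) := by
    intro i x
    simp only [Finset.mem_image, Finset.mem_range]
    refine exists_congr fun t => and_congr_right fun _ => ?_
    constructor
    · intro h; rw [← h, ← mul_assoc, hu, one_mul]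
    · intro h; rw [← h, ← mul_assoc, mul_comm _ (u i), hu, one_mul]
  have hS : ∀ i, ∑ t ∈ Finset.range (q i), F (u i * (b i - t)) =
      ∑ x, if (∃ t < q i, (q i : ZMod p) * x = b i - (t : ZMod p)) then F x else 0 := by
    intro i
    simp_rw [hA]
    rw [Finset.sum_ite_mem, Finset.univ_inter, Finset.sum_image]
    intro s hs t ht hst
    simp only [Finset.coe_range, Set.mem_Iio] at hs ht
    beta_reduce at hst
    have h1 : (q i : ZMod p) * (u i * (b i - (s : ZMod p))) = q i * (u i * (b i - (t : ZMod p))) := by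
      rw [hst]
    rw [← mul_assoc, ← mul_assoc, mul_comm _ (u i), hu, one_mul, one_mul] at h1
    have h2 : (s : ZMod p) = t := by linear_combination -h1
    have h3 := congrArg ZMod.val h2
    rwa [ZMod.val_cast_of_lt (hs.trans (hlt i)), ZMod.val_cast_of_lt (ht.trans (hlt i))] at h3
  simp_rw [hS]
  rw [Finset.sum_comm]
  refine Finset.sum_congr rfl fun x _ => ?_
  obtain ⟨i, hi, hi'⟩ := hcov x
  rw [Finset.sum_eq_single i]
  · rw [if_pos hi]
  · intro j _ hj
    rw [if_neg fun h => hj (hi' j h)]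
  · simp

theorem bf_geom (p : ℕ) [NeZero p] (q : ℕ) (u b k : ZMod p) (hu : u * q = 1) :
    ‖∑ t ∈ Finset.range q, ZMod.stdAddChar (u * (b - (t : ZMod p)) * k)‖
      * ‖ZMod.stdAddChar (k * u) - 1‖ = ‖ZMod.stdAddChar k - 1‖ := by
  have hneg : ∀ v : ZMod p, ‖ZMod.stdAddChar (-v) - 1‖ = ‖ZMod.stdAddChar v - 1‖ := by
    intro v
    have h1 : ZMod.stdAddChar (-v) * (ZMod.stdAddChar v) = (1 : ℂ) := by
      rw [← AddChar.map_add_eq_mul, neg_add_cancel, AddChar.map_zero_eq_one]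
    have h2 : ZMod.stdAddChar (-v) - (1 : ℂ) = - (ZMod.stdAddChar (-v) * (ZMod.stdAddChar v - 1)) := by
      rw [mul_sub, h1]; ring
    rw [h2, norm_neg, norm_mul, AddChar.norm_apply, one_mul]
  have e : ∑ t ∈ Finset.range q, (ZMod.stdAddChar (u * (b - (t : ZMod p)) * k) : ℂ)
     = ZMod.stdAddChar (u * b * k) * ∑ t ∈ Finset.range q, (ZMod.stdAddChar (-(k * u))) ^ t := by
    rw [Finset.mul_sum]
    refine Finset.sum_congr rfl fun t _ => ?_
    rw [← AddChar.map_nsmul_eq_pow, ← AddChar.map_add_eq_mul]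
    congr 1
    rw [nsmul_eq_mul]; ring
  rw [e, ← hneg (k * u), ← hneg k, norm_mul, AddChar.norm_apply, one_mul, ← norm_mul, geom_sum_mul,
    ← AddChar.map_nsmul_eq_pow]
  congr 3
  rw [nsmul_eq_mul]
  linear_combination (-k) * hu

theorem bf_step (p : ℕ) [NeZero p] (hp : 11 ≤ p) (q : Fin 4 → ℕ) (hq0 : ∀ i, 0 < q i)
    (hlt : ∀ i, q i < p) (hinj : Function.Injective q) (hadd : ∀ i j, i ≠ j → q i + q j < p)
    (u : Fin 4 → ZMod p) (hu : ∀ i, u i * q i = 1) (b : Fin 4 → ZMod p)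
    (hcov : ∀ x : ZMod p, ∃! i : Fin 4, ∃ t < q i, (q i : ZMod p) * x = b i - (t : ZMod p))
    (j : Fin 4) : ∃ i, i ≠ j ∧ ((q j : ZMod p) = 2 * q i ∨ (q j : ZMod p) = -(2 * q i)) := by
  by_contra hcon
  push Not at hcon
  have : Fact (1 < p) := ⟨by omega⟩
  have hdist : ∀ i l, i ≠ l → (q i : ZMod p) ≠ q l ∧ (q i : ZMod p) ≠ -q l := by
    intro i l hil
    constructor
    · intro h
      have h3 := congrArg ZMod.val h
      rw [ZMod.val_cast_of_lt (hlt i), ZMod.val_cast_of_lt (hlt l)] at h3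
      exact hil (hinj h3)
    · intro h
      have h1 : ((q i + q l : ℕ) : ZMod p) = 0 := by push_cast; rw [h]; ring
      have h3 := congrArg ZMod.val h1
      rw [ZMod.val_cast_of_lt (hadd i l hil), ZMod.val_zero] at h3
      have := hq0 i
      omega
  have hqj : (q j : ZMod p) ≠ 0 := by
    intro h
    have := hu j
    rw [h, mul_zero] at this
    exact zero_ne_one this
  set S : Fin 4 → ℂ := fun i =>
    ∑ t ∈ Finset.range (q i), ZMod.stdAddChar (u i * (b i - (t : ZMod p)) * (q j : ZMod p)) with hS
  have hsum : ∑ i, S i = 0 := by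
    rw [hS]
    rw [bf_sum p q hlt u hu b hcov (fun x => ZMod.stdAddChar (x * (q j : ZMod p))),
      AddChar.sum_mulShift _ (ZMod.isPrimitive_stdAddChar p), if_neg hqj]
    simp
  rw [Fin.sum_univ_succAbove _ j] at hsum
  have hnorm : ‖S j‖ ≤ ∑ i : Fin 3, ‖S (j.succAbove i)‖ := by
    rw [eq_neg_of_add_eq_zero_left hsum, norm_neg]
    exact norm_sum_le _ _
  have hval : ∀ i, ‖S i‖ * ‖ZMod.stdAddChar ((q j : ZMod p) * u i) - 1‖ = ‖ZMod.stdAddChar (q j : ZMod p) - 1‖ :=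
    fun i => bf_geom p (q i) (u i) (b i) (q j) (hu i)
  set N := ‖ZMod.stdAddChar (q j : ZMod p) - 1‖ with hN
  have hpos : ∀ v : ZMod p, v ≠ 0 → 0 < ‖ZMod.stdAddChar v - 1‖ := by
    intro v hv
    rw [norm_pos_iff, sub_ne_zero]
    intro h
    apply hv
    apply ZMod.injective_stdAddChar
    rw [h, AddChar.map_zero_eq_one]
  have hNpos : 0 < N := hpos _ hqj
  have hne : ∀ i, (q j : ZMod p) * u i ≠ 0 := by
    intro i h
    apply hqj
    linear_combination (q i : ZMod p) * h - q j * hu i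
  set m : Fin 4 → ℕ := fun i => ((q j : ZMod p) * u i).valMinAbs.natAbs with hm
  have hSn : ∀ i, ‖S i‖ = N / 2 * (1 / Real.sin (m i * (Real.pi / p))) := by
    intro i
    have h1 := hval i
    have h2 := hpos _ (hne i)
    rw [bf_norm] at h1 h2
    change ‖S i‖ * (2 * Real.sin (m i * (Real.pi / p))) = N at h1
    change 0 < 2 * Real.sin (m i * (Real.pi / p)) at h2
    have h3 : 0 < Real.sin (m i * (Real.pi / p)) := by linarith
    rw [← h1]
    generalize Real.sin (m i * (Real.pi / p)) = z at h3
    field_simp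
  have hmj : m j = 1 := by
    simp only [hm]
    rw [mul_comm, hu]
    have : ((1 : ℤ) : ZMod p).valMinAbs = 1 := by
      rw [ZMod.valMinAbs_spec]
      simp
      omega
    simpa using congrArg Int.natAbs this
  -- values of m in terms of residues
  have hmv : ∀ i, (q j : ZMod p) = m i * q i ∨ (q j : ZMod p) = -(m i * q i) := by
    intro i
    have e : (((q j : ZMod p) * u i).valMinAbs : ZMod p) = q j * u i := ZMod.coe_valMinAbs _
    rcases Int.natAbs_eq ((q j : ZMod p) * u i).valMinAbs with h | h
    · left
      rw [h] at e
      rw [Int.cast_natCast] at e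
      change (m i : ZMod p) = _ at e
      rw [e, mul_assoc, hu, mul_one]
    · right
      rw [h] at e
      rw [Int.cast_neg, Int.cast_natCast] at e
      change -(m i : ZMod p) = _ at e
      rw [← neg_mul, e, mul_assoc, hu, mul_one]
  have hm2 : ∀ i, 2 * m i ≤ p := by
    intro i
    have := ZMod.natAbs_valMinAbs_le ((q j : ZMod p) * u i)
    simp only [hm]; omega
  have hm3 : ∀ i, i ≠ j → 3 ≤ m i := by
    intro i hi
    by_contra hlt3
    have hmi := hmv i
    have c : m i = 0 ∨ m i = 1 ∨ m i = 2 := by omega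
    rcases c with c | c | c <;> rw [c] at hmi
    · simp at hmi; exact hqj hmi
    · have := hdist j i hi.symm
      simp at hmi
      tauto
    · have := hcon i hi
      push_cast at hmi
      tauto
  have hminj : ∀ i l, m i = m l → i = l := by
    intro i l h
    by_contra hil
    have key : (q j : ZMod p) * u i = q j * u l ∨ (q j : ZMod p) * u i = - (q j * u l) := by
      rw [← ZMod.natAbs_valMinAbs_eq_natAbs_valMinAbs]
      exact h
    have hd := hdist i l hil
    rcases key with k | k
    · apply hd.1
      linear_combination (-(u j * q i * q l)) * k + q l * (u j * q j * hu i + hu j) - q i * (u j * q j * hu l + hu j)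
    · apply hd.2
      linear_combination (u j * q i * q l) * k - q l * (u j * q j * hu i + hu j) - q i * (u j * q j * hu l + hu j)
  have hfin := bf_unsorted p hp (fun i => m (j.succAbove i))
    (fun a c h => Fin.succAbove_right_injective (hminj _ _ h))
    (fun i => hm3 _ (Fin.succAbove_ne j i)) (fun i => hm2 _)
  simp_rw [hSn] at hnorm
  rw [← Finset.mul_sum, hmj, Nat.cast_one, one_mul] at hnorm
  have := le_of_mul_le_mul_left hnorm (by positivity)
  linarith

theorem bf_perm : ∀ f : Fin 4 → Fin 4, Function.Injective f → (∀ i, f i ≠ i) →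
    f (f (f (f 0))) = 0 := by
  intro f hf hne
  have a1 : f 0 ≠ f 1 := hf.ne (by decide)
  have a2 : f 0 ≠ f 2 := hf.ne (by decide)
  have a3 : f 0 ≠ f 3 := hf.ne (by decide)
  have a4 : f 1 ≠ f 2 := hf.ne (by decide)
  have a5 : f 1 ≠ f 3 := hf.ne (by decide)
  have a6 : f 2 ≠ f 3 := hf.ne (by decide)
  have n0 := hne 0
  have n1 := hne 1
  have n2 := hne 2
  have n3 := hne 3
  generalize h0 : f 0 = x0 at *
  generalize h1 : f 1 = x1 at *
  generalize h2 : f 2 = x2 at *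
  generalize h3 : f 3 = x3 at *
  fin_cases x0 <;> fin_cases x1 <;> fin_cases x2 <;> fin_cases x3 <;> simp_all

theorem bf_15 (p q1 q2 q3 q4 : ℕ) (hp : p = 15)
    (h12 : q2 < q1) (h23 : q3 < q2) (h34 : q4 < q3) (h4 : 1 ≤ q4)
    (hg1 : Nat.gcd p q1 = 1) (hg2 : Nat.gcd p q2 = 1)
    (hg3 : Nat.gcd p q3 = 1) (hg4 : Nat.gcd p q4 = 1) (hsum : q1 + q2 + q3 + q4 = p) :
    q2 = 2 * q3 := by
  subst hp
  have e : q1 = 15 - q2 - q3 - q4 := by omega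
  have b4 : q4 ≤ 2 := by omega
  have b3 : q3 ≤ 4 := by omega
  have b2 : q2 ≤ 6 := by omega
  subst e
  interval_cases q4 <;> interval_cases q3 <;> interval_cases q2 <;> simp_all

theorem bf_17 (q1 q2 q3 q4 : ℕ)
    (h12 : q2 < q1) (h23 : q3 < q2) (h34 : q4 < q3) (h4 : 1 ≤ q4)
    (hsum : q1 + q2 + q3 + q4 = 17)
    (hstep : ∀ j : Fin 4, ∃ i : Fin 4, i ≠ j ∧
      (((![q1, q2, q3, q4] j : ℕ) : ZMod 17) = 2 * ((![q1, q2, q3, q4] i : ℕ) : ZMod 17) ∨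
       ((![q1, q2, q3, q4] j : ℕ) : ZMod 17) = -(2 * ((![q1, q2, q3, q4] i : ℕ) : ZMod 17)))) :
    False := by
  have b4 : q4 ≤ 2 := by omega
  have b3 : q3 ≤ 4 := by omega
  have b2 : q2 ≤ 7 := by omega
  have e : q1 = 17 - q2 - q3 - q4 := by omega
  subst e
  interval_cases q4 <;> interval_cases q3 <;> interval_cases q2 <;>
    first
    | omega
    | (revert hstep; decide)

/-- If the four rational Beatty sequences `S(p/qᵢ, βᵢ)` form a disjoint
covering system of the integers, with `q₁ > q₂ > q₃ > q₄ ≥ 1` and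
`gcd(p, qᵢ) = 1`, then `q2 = 2 * q3`. -/
theorem fraenkel_four_q2_eq_two_q3 (p q1 q2 q3 q4 : ℕ) (hp : 0 < p)
    (h12 : q2 < q1) (h23 : q3 < q2) (h34 : q4 < q3) (h4 : 1 ≤ q4)
    (hg1 : Nat.gcd p q1 = 1) (hg2 : Nat.gcd p q2 = 1)
    (hg3 : Nat.gcd p q3 = 1) (hg4 : Nat.gcd p q4 = 1)
    (β : Fin 4 → ℝ)
    (hcov : ∀ m : ℤ, ∃! i : Fin 4,
      m ∈ beattySet ((p : ℝ) / ((![q1, q2, q3, q4] i : ℕ) : ℝ)) (β i)) :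
    q2 = 2 * q3 := by
  set q : Fin 4 → ℕ := ![q1, q2, q3, q4] with hqdef
  have : NeZero p := ⟨hp.ne'⟩
  have hq0 : ∀ i, 0 < q i := by
    intro i
    fin_cases i <;> simp [hqdef] <;> omega
  have hg : ∀ i, Nat.Coprime (q i) p := by
    intro i
    fin_cases i
    · exact (Nat.coprime_comm.1 hg1)
    · exact (Nat.coprime_comm.1 hg2)
    · exact (Nat.coprime_comm.1 hg3)
    · exact (Nat.coprime_comm.1 hg4)
  have hlt := bf_lt p hp q hq0 β hcov
  set u : Fin 4 → ZMod p := fun i => (q i : ZMod p)⁻¹ with hudef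
  have hu : ∀ i, u i * q i = 1 := by
    intro i
    rw [mul_comm]
    exact ZMod.coe_mul_inv_eq_one _ (hg i)
  set b : Fin 4 → ZMod p := fun i => ((⌊(q i : ℝ) * β i⌋ : ℤ) : ZMod p) with hbdef
  have hcov' : ∀ x : ZMod p, ∃! i : Fin 4,
      ∃ t < q i, (q i : ZMod p) * x = b i - (t : ZMod p) := by
    intro x
    obtain ⟨m, rfl⟩ := ZMod.intCast_surjective x
    have := hcov m
    simp_rw [fun i => bf_mem p (q i) (hq0 i) (β i) m] at this
    exact this
  have hsum : q1 + q2 + q3 + q4 = p := by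
    have := bf_sum p q hlt u hu b hcov' (fun _ => 1)
    simp only [Finset.sum_const, Finset.card_range, nsmul_eq_mul, mul_one, Finset.card_univ,
      ZMod.card, Fin.sum_univ_four] at this
    exact_mod_cast this
  have hp10 : p ≠ 10 := by
    intro h
    have e1 : q1 = 4 := by omega
    rw [h, e1] at hg1
    norm_num at hg1
  have hp11 : 11 ≤ p := by omega
  have hinj : Function.Injective q := by
    intro i j h
    fin_cases i <;> fin_cases j <;> simp [hqdef] at h ⊢ <;> omega
  have hadd : ∀ i j, i ≠ j → q i + q j < p := by
    intro i j h
    fin_cases i <;> fin_cases j <;> simp [hqdef] at h ⊢ <;> omega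
  have hstep := bf_step p hp11 q hq0 hlt hinj hadd u hu b hcov'
  have h1517 : p = 15 ∨ p = 17 := by
    choose f hf hfq using hstep
    have hfinj : Function.Injective f := by
      intro i j h
      by_contra hij
      have hi := hfq i
      have hj := hfq j
      rw [← h] at hj
      have : (q i : ZMod p) = q j ∨ (q i : ZMod p) = - q j := by
        rcases hi with hi | hi <;> rcases hj with hj | hj <;> rw [hi, hj] <;> simp
      rcases this with h | h
      · have h3 := congrArg ZMod.val h
        rw [ZMod.val_cast_of_lt (hlt i), ZMod.val_cast_of_lt (hlt j)] at h3
        exact hij (hinj h3)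
      · have h1 : ((q i + q j : ℕ) : ZMod p) = 0 := by push_cast; rw [h]; ring
        have h3 := congrArg ZMod.val h1
        rw [ZMod.val_cast_of_lt (hadd i j hij), ZMod.val_zero] at h3
        have := hq0 i
        omega
    have h4 := bf_perm f hfinj hf
    have k0 := hfq 0
    have k1 := hfq (f 0)
    have k2 := hfq (f (f 0))
    have k3 := hfq (f (f (f 0)))
    rw [h4] at k3
    have key : (q 0 : ZMod p) = 16 * q 0 ∨ (q 0 : ZMod p) = -(16 * q 0) := by
      generalize (q 0 : ZMod p) = a0 at *
      generalize (q (f 0) : ZMod p) = a1 at *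
      generalize (q (f (f 0)) : ZMod p) = a2 at *
      generalize (q (f (f (f 0))) : ZMod p) = a3 at *
      have c2 : a2 = 4 * a0 ∨ a2 = -(4 * a0) := by
        rcases k2 with k2 | k2 <;> rcases k3 with k3 | k3 <;> rw [k2, k3]
        · left; ring
        · right; ring
        · right; ring
        · left; ring
      have c0 : a0 = 4 * a2 ∨ a0 = -(4 * a2) := by
        rcases k0 with k0 | k0 <;> rcases k1 with k1 | k1 <;> rw [k0, k1]
        · left; ring
        · right; ring
        · right; ring
        · left; ring
      rcases c0 with c0 | c0 <;> rcases c2 with c2 | c2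
      · left; linear_combination c0 + 4 * c2
      · right; linear_combination c0 + 4 * c2
      · right; linear_combination c0 - 4 * c2
      · left; linear_combination c0 - 4 * c2
    have hu0 := hu 0
    rcases key with k | k
    · left
      have h15 : ((15 : ℕ) : ZMod p) = 0 := by
        push_cast
        linear_combination (-15) * hu0 - u 0 * k
      rw [ZMod.natCast_eq_zero_iff] at h15
      have := Nat.le_of_dvd (by norm_num) h15
      interval_cases p <;> omega
    · right
      have h17 : ((17 : ℕ) : ZMod p) = 0 := by
        push_cast
        linear_combination (-17) * hu0 + u 0 * k
      rw [ZMod.natCast_eq_zero_iff] at h17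
      have := Nat.le_of_dvd (by norm_num) h17
      interval_cases p <;> omega
  clear hcov hcov'
  clear_value q
  rcases h1517 with h | h
  · exact bf_15 p q1 q2 q3 q4 h h12 h23 h34 h4 hg1 hg2 hg3 hg4 hsum
  · subst h
    subst hqdef
    exact (bf_17 q1 q2 q3 q4 h12 h23 h34 h4 hsum hstep).elim
end
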